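/- arXiv:1809.02104 — 3 statements merged into one kernel-verified Lean document; each statement's English description precedes it below -/
import Mathlib

section
/- (Gaussian isoperimetric inequality) For any measurable set A ⊂ ℝⁿ with Gaussian measure μ[A] = Φ(a), the Euclidean ε-expansion A(ε) = {x : d₂(x,A) ≤ ε} satisfies μ[A(ε)] ≥ Φ(a + ε). -/
open Real MeasureTheory ProbabilityTheory

/-- The standard normal CDF. -/
noncomputable def stdNormalCDF (z : ℝ) : ℝ :=
  (Real.sqrt (2 * Real.pi))⁻¹ * ∫ t in Set.Iic z, Real.exp (-t ^ 2 / 2)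

namespace GI
open Filter Topology Set

noncomputable def ph (t : ℝ) : ℝ := (Real.sqrt (2 * Real.pi))⁻¹ * Real.exp (-t ^ 2 / 2)

local notation "Ph" => stdNormalCDF

lemma ph_pos (t : ℝ) : 0 < ph t := by unfold ph; positivity

lemma ph_cont : Continuous ph := by unfold ph; fun_prop

lemma ph_eq : ph = gaussianPDFReal 0 1 := by
  ext t; simp [ph, gaussianPDFReal]

lemma ph_neg (t : ℝ) : ph (-t) = ph t := by simp [ph]

lemma ph_integrable : Integrable ph := by
  rw [ph_eq]; exact integrable_gaussianPDFReal 0 1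

lemma ph_integral : ∫ t, ph t = 1 := by
  rw [ph_eq]; exact integral_gaussianPDFReal_eq_one 0 (by norm_num)

lemma Ph_eq (z : ℝ) : Ph z = ∫ t in Iic z, ph t := by
  unfold ph; rw [integral_const_mul]; rfl

lemma hasDeriv_ph (t : ℝ) : HasDerivAt ph (-t * ph t) t := by
  have : HasDerivAt (fun t : ℝ => -t ^ 2 / 2) (-t) t := by
    have := ((hasDerivAt_pow 2 t).neg).div_const 2
    refine this.congr_deriv ?_
    simp; ring
  have := (this.exp).const_mul (Real.sqrt (2 * Real.pi))⁻¹
  refine this.congr_deriv ?_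
  unfold ph; ring

lemma hasDeriv_Ph (x : ℝ) : HasDerivAt Ph (ph x) x := by
  have h : Ph = fun x => (∫ t in Iic (0:ℝ), ph t) + ∫ t in (0:ℝ)..x, ph t := by
    ext z
    rw [Ph_eq, ← intervalIntegral.integral_Iic_sub_Iic ph_integrable.integrableOn
      ph_integrable.integrableOn]
    ring
  rw [h]
  exact (intervalIntegral.integral_hasDerivAt_right (ph_cont.intervalIntegrable _ _)
    ph_cont.stronglyMeasurable.stronglyMeasurableAtFilter ph_cont.continuousAt).const_add _

lemma Ph_cont : Continuous Ph :=
  continuous_iff_continuousAt.2 fun x => (hasDeriv_Ph x).continuousAt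

lemma Ph_strictMono : StrictMono Ph :=
  strictMono_of_hasDerivAt_pos hasDeriv_Ph ph_pos

lemma Ph_tendsto_top : Tendsto Ph atTop (𝓝 1) := by
  have := tendsto_setIntegral_of_monotone (μ := volume) (f := ph) (s := fun z : ℝ => Iic z)
    (fun _ => measurableSet_Iic) (fun a b h => Iic_subset_Iic.2 h)
    (ph_integrable.integrableOn)
  rw [iUnion_Iic, setIntegral_univ, ph_integral] at this
  simpa only [← Ph_eq] using this

lemma Ph_neg (x : ℝ) : Ph (-x) = 1 - Ph x := by
  have h1 : Ph (-x) = ∫ t in Ioi x, ph t := by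
    rw [Ph_eq, ← integral_comp_neg_Ioi]
    simp [ph_neg]
  have h2 := intervalIntegral.integral_Iic_add_Ioi (b := x) ph_integrable.integrableOn ph_integrable.integrableOn
  rw [ph_integral] at h2
  rw [h1, Ph_eq x]; linarith

lemma Ph_tendsto_bot : Tendsto Ph atBot (𝓝 0) := by
  have := (Ph_tendsto_top.comp tendsto_neg_atBot_atTop).const_sub 1
  simp only [sub_self] at this
  refine this.congr fun x => ?_
  simp [Ph_neg]

lemma Ph_lt_one (x : ℝ) : Ph x < 1 :=
  (Ph_strictMono (lt_add_one x)).trans_le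
    (Ph_strictMono.monotone.ge_of_tendsto Ph_tendsto_top _)

lemma Ph_pos (x : ℝ) : 0 < Ph x := by
  have := Ph_lt_one (-x); rw [Ph_neg] at this; linarith

noncomputable def q : ℝ → ℝ := Function.invFun Ph

lemma q_Ph (x : ℝ) : q (Ph x) = x := Function.leftInverse_invFun Ph_strictMono.injective x

lemma exists_Ph {p : ℝ} (h0 : 0 < p) (h1 : p < 1) : ∃ x, Ph x = p := by
  have := mem_range_of_exists_le_of_exists_ge Ph_cont
    ((Ph_tendsto_bot.eventually (gt_mem_nhds h0)).exists.imp fun _ h => h.le)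
    ((Ph_tendsto_top.eventually (lt_mem_nhds h1)).exists.imp fun _ h => h.le)
  exact this

lemma Ph_q {p : ℝ} (h0 : 0 < p) (h1 : p < 1) : Ph (q p) = p := by
  obtain ⟨x, rfl⟩ := exists_Ph h0 h1
  rw [q_Ph]

noncomputable def J (p : ℝ) : ℝ := ph (q p)

lemma J_pos (p : ℝ) : 0 < J p := ph_pos _

lemma hasDeriv_q {p : ℝ} (h0 : 0 < p) (h1 : p < 1) : HasDerivAt q (J p)⁻¹ p := by
  obtain ⟨x, rfl⟩ := exists_Ph h0 h1
  have hs : HasStrictDerivAt Ph (ph x) x :=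
    hasStrictDerivAt_of_hasDerivAt_of_continuousAt (f' := ph) (Eventually.of_forall hasDeriv_Ph) ph_cont.continuousAt
  have := (hs.to_local_left_inverse (ph_pos x).ne' (Eventually.of_forall q_Ph)).hasDerivAt
  simpa [J, q_Ph] using this

lemma hasDeriv_J {p : ℝ} (h0 : 0 < p) (h1 : p < 1) : HasDerivAt J (- q p) p := by
  have := (hasDeriv_ph (q p)).comp p (hasDeriv_q h0 h1)
  refine this.congr_deriv ?_
  have := (J_pos p).ne'
  change - q p * J p * (J p)⁻¹ = _
  field_simp

lemma hasDeriv_Jq {p : ℝ} (h0 : 0 < p) (h1 : p < 1) :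
    HasDerivAt (fun p => J p * q p) (1 - q p ^ 2) p := by
  have := (hasDeriv_J h0 h1).mul (hasDeriv_q h0 h1)
  refine this.congr_deriv ?_
  have := (J_pos p).ne'
  field_simp; ring

lemma q_mono {p r : ℝ} (h0 : 0 < p) (h : p ≤ r) (h1 : r < 1) : q p ≤ q r := by
  rw [← Ph_strictMono.le_iff_le, Ph_q h0 (h.trans_lt h1), Ph_q (h0.trans_le h) h1]; exact h

lemma q_one_sub {p : ℝ} (h0 : 0 < p) (h1 : p < 1) : q (1 - p) = - q p := by
  obtain ⟨x, rfl⟩ := exists_Ph h0 h1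
  rw [← Ph_neg, q_Ph, q_Ph]

lemma J_one_sub {p : ℝ} (h0 : 0 < p) (h1 : p < 1) : J (1 - p) = J p := by
  unfold J; rw [q_one_sub h0 h1, ph_neg]

lemma div_ph_mono : Monotone (fun t => t * (ph t)⁻¹) := by
  have hd : ∀ t, HasDerivAt (fun t => t * (ph t)⁻¹) ((1 + t ^ 2) * (ph t)⁻¹) t := by
    intro t
    have h := (ph_pos t).ne'
    have := (hasDerivAt_id t).mul ((hasDeriv_ph t).inv h)
    refine this.congr_deriv ?_
    simp only [id, Pi.inv_apply]
    field_simp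
  refine monotone_of_hasDerivAt_nonneg hd fun t => ?_
  have := ph_pos t
  positivity

/-- nonneg by derivative on [0,c) -/
lemma nonneg_of_deriv {f f' : ℝ → ℝ} {c : ℝ} (h0 : 0 ≤ f 0)
    (hd : ∀ x, 0 ≤ x → x < c → HasDerivAt f (f' x) x)
    (hf : ∀ x, 0 ≤ x → x < c → 0 ≤ f' x) : ∀ x, 0 ≤ x → x < c → 0 ≤ f x := by
  intro x hx hxc
  have : MonotoneOn f (Ico 0 c) := by
    refine monotoneOn_of_deriv_nonneg (convex_Ico 0 c)
      (fun y hy => (hd y hy.1 hy.2).continuousAt.continuousWithinAt)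
      (fun y hy => ?_) (fun y hy => ?_)
    · rw [interior_Ico] at hy
      exact (hd y hy.1.le hy.2).differentiableAt.differentiableWithinAt
    · rw [interior_Ico] at hy
      rw [(hd y hy.1.le hy.2).deriv]; exact hf y hy.1.le hy.2
  exact h0.trans (this ⟨le_rfl, hx.trans_lt hxc⟩ ⟨hx, hxc⟩ hx)

lemma dplus {f : ℝ → ℝ} {d c x : ℝ} (h : HasDerivAt f d (c + x)) :
    HasDerivAt (fun x => f (c + x)) d x := h.comp_const_add c x

lemma dminus {f : ℝ → ℝ} {d c x : ℝ} (h : HasDerivAt f d (c - x)) :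
    HasDerivAt (fun x => f (c - x)) (-d) x := h.comp_const_sub c x

section twopoint
variable {c : ℝ} (hc0 : 0 < c) (hc : c ≤ 1 / 2)
include hc0 hc

lemma tp_M : ∀ x, 0 ≤ x → x < c → 0 ≤ q (c + x) ^ 2 + q (c - x) ^ 2 - 2 * q c ^ 2 := by
  refine nonneg_of_deriv (f' := fun x => 2 * (q (c + x) * (ph (q (c + x)))⁻¹) -
    2 * (q (c - x) * (ph (q (c - x)))⁻¹)) (by simp; linarith) ?_ ?_
  · intro x hx hxc
    have h1 := (dplus (hasDeriv_q (p := c + x) (by linarith) (by linarith))).pow 2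
    have h2 := (dminus (hasDeriv_q (p := c - x) (by linarith) (by linarith))).pow 2
    have := (h1.add h2).sub_const (2 * q c ^ 2)
    refine this.congr_deriv ?_
    simp [J]; ring
  · intro x hx hxc
    have := div_ph_mono (q_mono (p := c - x) (r := c + x) (by linarith) (by linarith) (by linarith))
    simp only at this
    linarith

lemma tp_P : ∀ x, 0 ≤ x → x < c →
    0 ≤ J (c + x) ^ 2 + J (c - x) ^ 2 + 2 * x ^ 2 - 2 * J c ^ 2 - 2 * q c ^ 2 * x ^ 2 := by
  refine nonneg_of_deriv (f' := fun x => -2 * (J (c + x) * q (c + x)) + 2 * (J (c - x) * q (c - x))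
    + 4 * x - 4 * q c ^ 2 * x) (by simp; linarith) ?_ ?_
  · intro x hx hxc
    have h1 := (dplus (hasDeriv_J (p := c + x) (by linarith) (by linarith))).pow 2
    have h2 := (dminus (hasDeriv_J (p := c - x) (by linarith) (by linarith))).pow 2
    have := (((h1.add h2).add ((hasDerivAt_pow 2 x).const_mul 2)).sub_const (2 * J c ^ 2)).sub
      ((hasDerivAt_pow 2 x).const_mul (2 * q c ^ 2))
    refine this.congr_deriv ?_
    simp; ring
  · refine nonneg_of_deriv (f' := fun x => 2 * (q (c + x) ^ 2 + q (c - x) ^ 2 - 2 * q c ^ 2))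
      (by simp) ?_ ?_
    · intro x hx hxc
      have h1 := (dplus (hasDeriv_Jq (p := c + x) (by linarith) (by linarith))).const_mul (-2)
      have h2 := (dminus (hasDeriv_Jq (p := c - x) (by linarith) (by linarith))).const_mul 2
      have := ((h1.add h2).add ((hasDerivAt_id x).const_mul 4)).sub
        ((hasDerivAt_id x).const_mul (4 * q c ^ 2))
      refine this.congr_deriv ?_
      ring
    · intro x hx hxc
      have := tp_M hc0 hc x hx hxc
      linarith

lemma tp_abs {x : ℝ} (hx : 0 ≤ x) (hxc : x < c) : q (c + x) ^ 2 ≤ q (c - x) ^ 2 := by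
  have h1 := q_mono (p := c - x) (r := c + x) (by linarith) (by linarith) (by linarith)
  have h2 := q_mono (p := c + x) (r := 1 - (c - x)) (by linarith) (by linarith) (by linarith)
  rw [q_one_sub (by linarith) (by linarith)] at h2
  nlinarith

lemma tp_V : ∀ x, 0 ≤ x → x < c →
    0 ≤ -4 * (J c * q c) * x - (J (c + x) ^ 2 - J (c - x) ^ 2) := by
  refine nonneg_of_deriv (f' := fun x => -4 * (J c * q c) + 2 * (J (c + x) * q (c + x)) +
    2 * (J (c - x) * q (c - x))) (by simp) ?_ ?_
  · intro x hx hxc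
    have h1 := (dplus (hasDeriv_J (p := c + x) (by linarith) (by linarith))).pow 2
    have h2 := (dminus (hasDeriv_J (p := c - x) (by linarith) (by linarith))).pow 2
    have := ((hasDerivAt_id x).const_mul (-4 * (J c * q c))).sub (h1.sub h2)
    refine this.congr_deriv ?_
    simp; ring
  · refine nonneg_of_deriv (f' := fun x => 2 * (q (c - x) ^ 2 - q (c + x) ^ 2))
      (by simp; linarith) ?_ ?_
    · intro x hx hxc
      have h1 := (dplus (hasDeriv_Jq (p := c + x) (by linarith) (by linarith))).const_mul 2
      have h2 := (dminus (hasDeriv_Jq (p := c - x) (by linarith) (by linarith))).const_mul 2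
      have := (h1.const_add (-4 * (J c * q c))).add h2
      refine this.congr_deriv ?_
      ring
    · intro x hx hxc
      have := tp_abs hc0 hc hx hxc
      linarith

lemma tp_V0 {x : ℝ} (hx : 0 ≤ x) (hxc : x < c) : J (c - x) ≤ J (c + x) := by
  unfold J ph
  have := tp_abs hc0 hc hx hxc
  gcongr

lemma tp_main {x : ℝ} (hx : 0 ≤ x) (hxc : x < c) :
    2 * J c ≤ √(J (c + x) ^ 2 + x ^ 2) + √(J (c - x) ^ 2 + x ^ 2) := by
  have hP := tp_P hc0 hc x hx hxc
  have hV := tp_V hc0 hc x hx hxc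
  have hV0 := tp_V0 hc0 hc hx hxc
  have hm := J_pos c
  have hA := J_pos (c + x)
  have hB := J_pos (c - x)
  set X := √(J (c + x) ^ 2 + x ^ 2) with hX
  set Y := √(J (c - x) ^ 2 + x ^ 2) with hY
  have hX2 : X ^ 2 = J (c + x) ^ 2 + x ^ 2 := Real.sq_sqrt (by positivity)
  have hY2 : Y ^ 2 = J (c - x) ^ 2 + x ^ 2 := Real.sq_sqrt (by positivity)
  have hX0 : 0 ≤ X := Real.sqrt_nonneg _
  have hY0 : 0 ≤ Y := Real.sqrt_nonneg _
  generalize J (c + x) = A at *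
  generalize J (c - x) = B at *
  generalize J c = m at *
  generalize q c = k at *
  have h1 : (X ^ 2 - Y ^ 2) ^ 2 ≤ 16 * m ^ 2 * k ^ 2 * x ^ 2 := by
    have e1 : X ^ 2 - Y ^ 2 = A ^ 2 - B ^ 2 := by rw [hX2, hY2]; ring
    have e2 : 0 ≤ A ^ 2 - B ^ 2 := by nlinarith
    rw [e1]
    calc (A ^ 2 - B ^ 2) ^ 2 ≤ (-4 * (m * k) * x) ^ 2 := by
          apply pow_le_pow_left₀ e2; linarith
      _ = _ := by ring
  have h2 : 2 * k ^ 2 * x ^ 2 ≤ X ^ 2 + Y ^ 2 - 2 * m ^ 2 := by linarith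
  have h3 : (X ^ 2 - Y ^ 2) ^ 2 ≤ 8 * m ^ 2 * (X ^ 2 + Y ^ 2 - 2 * m ^ 2) := by
    have := mul_le_mul_of_nonneg_left h2 (by positivity : 0 ≤ 8 * m ^ 2)
    linarith
  by_contra! hlt
  have a1 : 0 < 4 * m ^ 2 - (X + Y) ^ 2 := by nlinarith
  have a2 : 0 < 4 * m ^ 2 - (X - Y) ^ 2 := by nlinarith
  have := mul_pos a1 a2
  nlinarith
end twopoint

lemma two_point {a b : ℝ} (ha0 : 0 < a) (ha1 : a < 1) (hb0 : 0 < b) (hb1 : b < 1) :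
    J ((a + b) / 2) ≤ (√(J a ^ 2 + ((a - b) / 2) ^ 2) + √(J b ^ 2 + ((a - b) / 2) ^ 2)) / 2 := by
  wlog hab : b ≤ a generalizing a b
  · have := this hb0 hb1 ha0 ha1 (by linarith)
    rw [add_comm b a] at this
    have e : ((b - a) / 2) ^ 2 = ((a - b) / 2) ^ 2 := by ring
    rw [e] at this
    linarith
  wlog hc : (a + b) / 2 ≤ 1 / 2 generalizing a b
  · have := this (a := 1 - b) (b := 1 - a) (by linarith) (by linarith) (by linarith) (by linarith)
      (by linarith) (by linarith)
    have e : (1 - b + (1 - a)) / 2 = 1 - (a + b) / 2 := by ring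
    have e2 : (1 - b - (1 - a)) / 2 = (a - b) / 2 := by ring
    rw [e, e2, J_one_sub (by linarith) (by linarith), J_one_sub (by linarith) (by linarith),
      J_one_sub (by linarith) (by linarith)] at this
    linarith
  have := tp_main (c := (a + b) / 2) (by linarith) hc (x := (a - b) / 2) (by linarith) (by linarith)
  have e : (a + b) / 2 + (a - b) / 2 = a := by ring
  have e2 : (a + b) / 2 - (a - b) / 2 = b := by ring
  rw [e, e2] at this
  linarith

section cube
variable {E : Type*} [NormedAddCommGroup E]

/-- Rademacher average along a list of vectors. -/
noncomputable def Av : List E → (E → ℝ) → E → ℝ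
  | [], g, x => g x
  | v :: l, g, x => (Av l g (x + v) + Av l g (x - v)) / 2

lemma Av_mono (l : List E) {g g' : E → ℝ} (h : ∀ x, g x ≤ g' x) (x : E) :
    Av l g x ≤ Av l g' x := by
  induction l generalizing x with
  | nil => exact h x
  | cons v l ih => simp only [Av]; have := ih (x + v); have := ih (x - v); linarith

lemma Av_const (l : List E) (c : ℝ) (x : E) : Av l (fun _ => c) x = c := by
  induction l generalizing x with
  | nil => rfl
  | cons v l ih => simp only [Av, ih]; ring

lemma Av_add (l : List E) (g g' : E → ℝ) (x : E) :
    Av l (fun y => g y + g' y) x = Av l g x + Av l g' x := by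
  induction l generalizing x with
  | nil => rfl
  | cons v l ih => simp only [Av, ih]; ring

lemma Av_pos (l : List E) {g : E → ℝ} (h : ∀ x, 0 < g x) (x : E) : 0 < Av l g x := by
  induction l generalizing x with
  | nil => exact h x
  | cons v l ih => simp only [Av]; have := ih (x + v); have := ih (x - v); linarith

lemma Av_nonneg (l : List E) {g : E → ℝ} (h : ∀ x, 0 ≤ g x) (x : E) : 0 ≤ Av l g x := by
  have := Av_mono l h x; rwa [Av_const] at this

lemma Av_lt_one (l : List E) {g : E → ℝ} (h : ∀ x, g x < 1) (x : E) : Av l g x < 1 := by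
  induction l generalizing x with
  | nil => exact h x
  | cons v l ih => simp only [Av]; have := ih (x + v); have := ih (x - v); linarith

lemma sqrt_add_le_half (a b c d : ℝ) :
    √(((a + b) / 2) ^ 2 + ((c + d) / 2) ^ 2) ≤ (√(a ^ 2 + c ^ 2) + √(b ^ 2 + d ^ 2)) / 2 := by
  have h1 := Real.sq_sqrt (by positivity : 0 ≤ a ^ 2 + c ^ 2)
  have h2 := Real.sq_sqrt (by positivity : 0 ≤ b ^ 2 + d ^ 2)
  have h3 := Real.sqrt_nonneg (a ^ 2 + c ^ 2)
  have h4 := Real.sqrt_nonneg (b ^ 2 + d ^ 2)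
  set X := √(a ^ 2 + c ^ 2)
  set Y := √(b ^ 2 + d ^ 2)
  apply Real.sqrt_le_iff.2
  refine ⟨by positivity, ?_⟩
  have h5 : a * b + c * d ≤ X * Y := by
    apply abs_le_of_sq_le_sq' _ (by positivity) |>.2
    rw [mul_pow, h1, h2]
    nlinarith [sq_nonneg (a * d - b * c)]
  nlinarith

lemma Av_mink (l : List E) (g w : E → ℝ) (x : E) :
    √(Av l g x ^ 2 + Av l w x ^ 2) ≤ Av l (fun y => √(g y ^ 2 + w y ^ 2)) x := by
  induction l generalizing x with
  | nil => exact le_rfl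
  | cons v l ih =>
    simp only [Av]
    refine (sqrt_add_le_half _ _ _ _).trans ?_
    have := ih (x + v); have := ih (x - v); linarith

/-- difference bound -/
lemma Av_diff (l : List E) {f w : E → ℝ} {v : E}
    (h : ∀ y, |f (y + v) - f y| ≤ w y) (x : E) :
    |Av l f (x + v) - Av l f x| ≤ Av l w x := by
  induction l generalizing x with
  | nil => exact h x
  | cons u l ih =>
    simp only [Av]
    have h1 := ih (x + u)
    have h2 := ih (x - u)
    rw [show x + u + v = x + v + u by abel] at h1
    rw [show x - u + v = x + v - u by abel] at h2
    rw [abs_le] at *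
    constructor <;> linarith

theorem cube (l : List E) {f : E → ℝ} {w : E → E → ℝ} (f0 : ∀ x, 0 < f x) (f1 : ∀ x, f x < 1)
    (hw : ∀ v ∈ l, ∀ y, |f (y + (v + v)) - f y| ≤ 2 * w v y ∧ |f (y + (-v + -v)) - f y| ≤ 2 * w v y)
    (x : E) :
    J (Av l f x) ≤ Av l (fun y => √(J (f y) ^ 2 + (l.map fun v => w v y ^ 2).sum)) x := by
  induction l generalizing x with
  | nil =>
    simp only [Av, List.map_nil, List.sum_nil, add_zero]
    rw [Real.sqrt_sq (J_pos _).le]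
  | cons v l ih =>
    have ih := ih fun u hu => hw u (List.mem_cons_of_mem _ hu)
    have hv := hw v List.mem_cons_self
    simp only [Av]
    refine (two_point (Av_pos l f0 _) (Av_lt_one l f1 _) (Av_pos l f0 _) (Av_lt_one l f1 _)).trans ?_
    set U : E → ℝ := fun y => √(J (f y) ^ 2 + (l.map fun v => w v y ^ 2).sum) with hU
    have hsum : ∀ y, 0 ≤ (l.map fun v => w v y ^ 2).sum := by
      intro y
      apply List.sum_nonneg
      intro a ha
      obtain ⟨u, -, rfl⟩ := List.mem_map.1 ha
      positivity
    have key : ∀ z, ∀ s : ℝ, |s| ≤ Av l (w v) z →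
        √(J (Av l f z) ^ 2 + s ^ 2) ≤
          Av l (fun y => √(J (f y) ^ 2 + ((v :: l).map fun v => w v y ^ 2).sum)) z := by
      intro z s hs
      calc √(J (Av l f z) ^ 2 + s ^ 2) ≤ √(Av l U z ^ 2 + Av l (w v) z ^ 2) := by
            apply Real.sqrt_le_sqrt
            have h1 := pow_le_pow_left₀ (J_pos _).le (ih z) 2
            have h2 := pow_le_pow_left₀ (abs_nonneg s) hs 2
            rw [sq_abs] at h2
            linarith
        _ ≤ _ := Av_mink l U (w v) z
        _ = _ := by
            congr 1
            ext y
            simp only [hU, List.map_cons, List.sum_cons]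
            rw [Real.sq_sqrt (add_nonneg (sq_nonneg _) (hsum y))]
            congr 1; ring
    have e2 : ∀ y, Av l (fun y => 2 * w v y) y = 2 * Av l (w v) y := by
      intro y; simp only [two_mul, Av_add]
    have k1 : |Av l f (x + v) - Av l f (x - v)| ≤ 2 * Av l (w v) (x - v) := by
      have := Av_diff l (fun y => (hv y).1) (x - v)
      rwa [e2, show x - v + (v + v) = x + v by abel] at this
    have k2 : |Av l f (x + v) - Av l f (x - v)| ≤ 2 * Av l (w v) (x + v) := by
      have := Av_diff l (fun y => (hv y).2) (x + v)
      rwa [e2, show x + v + (-v + -v) = x - v by abel, abs_sub_comm] at this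
    have a1 := key (x + v) ((Av l f (x + v) - Av l f (x - v)) / 2)
      (by rw [abs_div, abs_two]; linarith)
    have a2 := key (x - v) ((Av l f (x + v) - Av l f (x - v)) / 2)
      (by rw [abs_div, abs_two]; linarith)
    linarith

end cube

section meas
variable {E : Type*} [NormedAddCommGroup E] [MeasurableSpace E] [BorelSpace E]

/-- law of the Rademacher sum along a list of vectors -/
noncomputable def muL : List E → Measure E
  | [] => Measure.dirac 0
  | v :: l => (2⁻¹ : ENNReal) • (muL l).map (fun y => y + v) +
      (2⁻¹ : ENNReal) • (muL l).map (fun y => y - v)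

instance muL_prob (l : List E) : IsProbabilityMeasure (muL l) := by
  induction l with
  | nil => unfold muL; infer_instance
  | cons v l ih =>
    constructor
    rw [muL, Measure.add_apply, Measure.smul_apply, Measure.smul_apply,
      Measure.map_apply (by fun_prop) MeasurableSet.univ,
      Measure.map_apply (by fun_prop) MeasurableSet.univ]
    simp [ENNReal.inv_two_add_inv_two]

lemma muL_cons {F : Type*} [NormedAddCommGroup F] [NormedSpace ℝ F]
    [SecondCountableTopologyEither E F] (v : E) (l : List E) {g : E → F}
    (hg : Continuous g) {C : ℝ} (hC : ∀ x, ‖g x‖ ≤ C) :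
    ∫ y, g y ∂(muL (v :: l)) =
      (2⁻¹ : ℝ) • (∫ y, g (y + v) ∂(muL l) + ∫ y, g (y - v) ∂(muL l)) := by
  have hi : ∀ (μ : Measure E) [IsFiniteMeasure μ], Integrable g μ := fun μ _ =>
    Integrable.of_bound hg.aestronglyMeasurable C (Eventually.of_forall hC)
  have p1 : IsFiniteMeasure ((muL l).map (fun y => y + v)) := inferInstance
  have p2 : IsFiniteMeasure ((muL l).map (fun y => y - v)) := inferInstance
  rw [muL, integral_add_measure ((hi _).smul_measure (by simp)) ((hi _).smul_measure (by simp)),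
    integral_smul_measure, integral_smul_measure,
    integral_map (by fun_prop) hg.aestronglyMeasurable,
    integral_map (by fun_prop) hg.aestronglyMeasurable]
  simp

lemma muL_Av [SecondCountableTopology E] (l : List E) {g : E → ℝ} (hg : Continuous g) {C : ℝ} (hC : ∀ x, ‖g x‖ ≤ C) (x : E) :
    ∫ y, g (x + y) ∂(muL l) = Av l g x := by
  induction l generalizing x with
  | nil => simp [muL, Av]
  | cons v l ih =>
    rw [muL_cons v l (g := fun y => g (x + y)) (by fun_prop) (fun y => hC _)]
    simp only [Av, ← ih]
    have e1 : ∀ y, x + (y + v) = x + v + y := fun y => by abel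
    have e2 : ∀ y, x + (y - v) = x - v + y := fun y => by abel
    simp only [e1, e2, smul_eq_mul]
    ring
end meas

lemma muL_charFun {E : Type*} [NormedAddCommGroup E] [InnerProductSpace ℝ E] [MeasurableSpace E]
    [BorelSpace E] [SecondCountableTopology E] (l : List E) (t : E) :
    charFun (muL l) t = (l.map fun v => (Real.cos (inner ℝ v t) : ℂ)).prod := by
  induction l with
  | nil => simp [muL, charFun]
  | cons v l ih =>
    rw [charFun, muL_cons (C := 1) v l (by fun_prop) (fun x => by rw [Complex.norm_exp_ofReal_mul_I])]
    simp only [inner_add_left, inner_sub_left, Complex.ofReal_add, Complex.ofReal_sub, add_mul, sub_mul, Complex.exp_add, Complex.exp_sub,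
      div_eq_mul_inv]
    rw [integral_mul_const, integral_mul_const, List.map_cons, List.prod_cons, ← ih, charFun,
      Complex.ofReal_cos, Complex.cos, ← Complex.exp_neg]
    simp; ring

lemma cos_tendsto (s : ℝ) : Tendsto (fun N : ℕ => (Real.cos ((√N)⁻¹ * s) : ℂ) ^ N) atTop
    (𝓝 (Complex.exp (-s ^ 2 / 2))) := by
  have hint : ∀ g : ℝ → ℝ, ∫ x, g x ∂(muL [(1:ℝ)]) = (g 1 + g (-1)) / 2 := by
    intro g
    rw [muL, muL, Measure.map_dirac' (f := fun y : ℝ => y + 1) (by fun_prop) 0,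
      Measure.map_dirac' (f := fun y : ℝ => y - 1) (by fun_prop) 0,
      integral_add_measure, integral_smul_measure, integral_smul_measure,
      integral_dirac, integral_dirac]
    · simp; ring
    · exact (integrable_dirac (by simp)).smul_measure (by simp)
    · exact (integrable_dirac (by simp)).smul_measure (by simp)
  have := tendsto_charFun_inv_sqrt_mul_pow (P := muL [(1:ℝ)]) (X := id) aemeasurable_id
    (by rw [hint]; simp) (by rw [hint]; simp) s
  simp only [Measure.map_id, muL_charFun] at this
  simpa using this

lemma flat_prod {M : Type*} [CommMonoid M] {ι E : Type*} (L : List ι) (N : ℕ) (u : ι → E)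
    (f : E → M) :
    ((L.flatMap fun k => List.replicate N (u k)).map f).prod = (L.map fun k => f (u k) ^ N).prod := by
  induction L with
  | nil => simp
  | cons a L ih => simp [ih]

lemma flat_sum {M : Type*} [AddCommMonoid M] {ι E : Type*} (L : List ι) (N : ℕ) (u : ι → E)
    (f : E → M) :
    ((L.flatMap fun k => List.replicate N (u k)).map f).sum = (L.map fun k => N • f (u k)).sum := by
  induction L with
  | nil => simp
  | cons a L ih => simp [ih]

noncomputable def PM {E : Type*} [MeasurableSpace E] (μ : Measure E) [h : IsProbabilityMeasure μ] :
    ProbabilityMeasure E := ⟨μ, h⟩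

lemma PM_coe {E : Type*} [MeasurableSpace E] (μ : Measure E) [h : IsProbabilityMeasure μ] :
    (PM μ : Measure E) = μ := rfl

section clt
variable (n : ℕ)
local notation "EE" => EuclideanSpace ℝ (Fin n)

noncomputable def gam : Measure EE := (Measure.pi fun _ : Fin n => gaussianReal 0 1).map (WithLp.toLp 2)

instance : IsProbabilityMeasure (gam n) :=
  Measure.isProbabilityMeasure_map (by fun_prop)

noncomputable def LL (N : ℕ) : List EE :=
  (List.finRange n).flatMap fun k => List.replicate N (EuclideanSpace.single k (√N)⁻¹)

lemma clt : Tendsto (fun N : ℕ => PM (muL (LL n N))) atTop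
    (𝓝 (PM (gam n))) := by
  apply ProbabilityMeasure.tendsto_of_tendsto_charFun
  intro t
  simp only [PM_coe, gam, muL_charFun, LL]
  rw [charFun_pi]
  simp only [flat_prod, ← Fin.prod_univ_def]
  refine tendsto_finsetProd _ fun k _ => ?_
  have := cos_tendsto (t k)
  simp only [charFun_gaussianReal]
  simpa [EuclideanSpace.inner_single_left, neg_div] using this

lemma clt_int {g : EE → ℝ} (hg : Continuous g) {C : ℝ} (hC : ∀ x, ‖g x‖ ≤ C) :
    Tendsto (fun N : ℕ => Av (LL n N) g 0) atTop (𝓝 (∫ x, g x ∂(gam n))) := by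
  have := (ProbabilityMeasure.tendsto_iff_forall_integral_tendsto.1 (clt n))
    (BoundedContinuousFunction.ofNormedAddCommGroup g hg C hC)
  simp only [PM_coe, BoundedContinuousFunction.coe_ofNormedAddCommGroup] at this
  refine this.congr fun N => ?_
  rw [← muL_Av _ hg hC]; simp
end clt

lemma ph_le_one (t : ℝ) : ph t ≤ 1 := by
  unfold ph
  have h1 : (√(2 * π))⁻¹ ≤ 1 := by
    apply inv_le_one_of_one_le₀
    rw [Real.one_le_sqrt]
    linarith [Real.pi_gt_three]
  have h2 : Real.exp (-t ^ 2 / 2) ≤ 1 := by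
    rw [Real.exp_le_one_iff]; nlinarith [sq_nonneg t]
  have := Real.exp_pos (-t ^ 2 / 2)
  have : 0 ≤ (√(2 * π))⁻¹ := by positivity
  nlinarith

lemma abs_mul_ph_le (t : ℝ) : ‖-t * ph t‖ ≤ 1 := by
  have h1 : (√(2 * π))⁻¹ ≤ 1 := by
    apply inv_le_one_of_one_le₀
    rw [Real.one_le_sqrt]
    linarith [Real.pi_gt_three]
  have h2 : |t| * Real.exp (-t ^ 2 / 2) ≤ 1 := by
    rw [show -t ^ 2 / 2 = -(t ^ 2 / 2) by ring, Real.exp_neg, mul_inv_le_iff₀ (Real.exp_pos _), one_mul]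
    have := Real.add_one_le_exp (t ^ 2 / 2)
    rcases abs_cases t with h | h <;> nlinarith [sq_nonneg (t - 1), sq_nonneg (t + 1)]
  rw [norm_mul, norm_neg, Real.norm_eq_abs, Real.norm_eq_abs, abs_of_pos (ph_pos t)]
  unfold ph
  have h3 : 0 ≤ (√(2 * π))⁻¹ := by positivity
  have h4 : 0 ≤ |t| * Real.exp (-t ^ 2 / 2) := by positivity
  nlinarith

lemma ph_lip (a b : ℝ) : |ph b - ph a| ≤ |b - a| := by
  have := Convex.norm_image_sub_le_of_norm_hasDerivWithin_le (s := univ) (C := 1) (x := a) (y := b)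
    (fun x _ => (hasDeriv_ph x).hasDerivWithinAt) (fun x _ => abs_mul_ph_le x) convex_univ
    (mem_univ _) (mem_univ _)
  simpa using this

lemma Ph_quad (a b : ℝ) : |Ph b - Ph a| ≤ ph a * |b - a| + (b - a) ^ 2 := by
  have := Convex.norm_image_sub_le_of_norm_hasDerivWithin_le (s := uIcc a b) (C := ph a + |b - a|)
    (x := a) (y := b)
    (fun x _ => (hasDeriv_Ph x).hasDerivWithinAt) (fun x hx => ?_) (convex_uIcc a b)
    left_mem_uIcc right_mem_uIcc
  · simp only [Real.norm_eq_abs] at this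
    rw [add_mul, ← sq, sq_abs] at this
    exact this
  · rw [Real.norm_eq_abs, abs_of_pos (ph_pos x)]
    have h1 := ph_lip a x
    have h2 := abs_sub_left_of_mem_uIcc hx
    rw [abs_sub_comm b a, abs_sub_comm a b]
    have := le_abs_self (ph x - ph a)
    linarith

lemma sqrt_sub' {a b : ℝ} (ha : 0 ≤ a) (hb : 0 ≤ b) : √(a + b) ≤ √a + √b := by
  apply Real.sqrt_le_iff.2
  refine ⟨by positivity, ?_⟩
  have := Real.sq_sqrt ha
  have := Real.sq_sqrt hb
  have : 0 ≤ √a * √b := by positivity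
  nlinarith

section bob
variable (n : ℕ)
local notation "EE" => EuclideanSpace ℝ (Fin n)

lemma Ph_comp_cont {D : EE → ℝ} (hD : ∀ x y, |D x - D y| ≤ ‖x - y‖) : Continuous D := by
  have : LipschitzWith 1 D := LipschitzWith.of_dist_le_mul fun x y => by
    simpa [Real.dist_eq, dist_eq_norm] using hD x y
  exact this.continuous

lemma Ph_integrable {h : EE → ℝ} (hh : Continuous h) :
    Integrable (fun x => Ph (h x)) (gam n) :=
  Integrable.of_bound (Ph_cont.comp hh).aestronglyMeasurable 1
    (Eventually.of_forall fun x => by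
      rw [Real.norm_eq_abs, abs_of_pos (Ph_pos _)]; exact (Ph_lt_one _).le)

lemma int01 {h : EE → ℝ} (hh : Continuous h) :
    0 < ∫ x, Ph (h x) ∂(gam n) ∧ ∫ x, Ph (h x) ∂(gam n) < 1 := by
  have pos : ∀ {h : EE → ℝ} (hh : Continuous h), 0 < ∫ x, Ph (h x) ∂(gam n) := by
    intro h hh
    rw [integral_pos_iff_support_of_nonneg (fun x => (Ph_pos _).le) (Ph_integrable n hh)]
    have : Function.support (fun x => Ph (h x)) = univ := by
      ext x; simp [(Ph_pos (h x)).ne']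
    rw [this]; simp
  refine ⟨pos hh, ?_⟩
  have := pos hh.neg
  simp only [Ph_neg, Pi.neg_apply] at this
  rw [integral_sub (integrable_const _) (Ph_integrable n hh)] at this
  simp at this
  exact this

theorem bob {D : EE → ℝ} {C : ℝ} (hC : 0 ≤ C) (hD : ∀ x y, |D x - D y| ≤ ‖x - y‖)
    (hD2 : ∀ y, ∃ v : EE, ‖v‖ ≤ 1 ∧ ∀ z, |D (y + z) - D y - inner ℝ v z| ≤ C * ‖z‖ ^ 2)
    {k : ℝ} (hk : 0 < k) (s : ℝ) :
    J (∫ x, Ph (k * (s - D x)) ∂(gam n)) ≤ √(1 + k ^ 2) * ∫ x, ph (k * (s - D x)) ∂(gam n) := by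
  have hDc := Ph_comp_cont n hD
  choose v hv1 hv2 using hD2
  set h : EE → ℝ := fun y => k * (s - D y) with hh
  have hhc : Continuous h := by fun_prop
  set K : ℝ := 2 * (k * C + k ^ 2) with hK
  have hK0 : 0 ≤ K := by positivity
  let w : EE → EE → ℝ := fun u y => ph (h y) * k * |inner ℝ (v y) u| + K * ‖u‖ ^ 2
  have hf0 : ∀ y, 0 < Ph (h y) := fun y => Ph_pos _
  have hf1 : ∀ y, Ph (h y) < 1 := fun y => Ph_lt_one _
  have hstep : ∀ u y, |Ph (h (y + (u + u))) - Ph (h y)| ≤ 2 * w u y := by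
    intro u y
    have a1 := Ph_quad (h y) (h (y + (u + u)))
    have a2 := hv2 y (u + u)
    have a3 := hD (y + (u + u)) y
    have e1 : h (y + (u + u)) - h y = - k * (D (y + (u + u)) - D y) := by simp only [hh]; ring
    rw [e1] at a1
    rw [add_sub_cancel_left] at a3
    rw [← two_smul ℝ u, norm_smul, Real.norm_eq_abs, abs_two] at a2 a3 
    rw [← two_smul ℝ u] at a1 ⊢
    rw [inner_smul_right] at a2
    have a4 : |D (y + (2:ℝ) • u) - D y| ≤ 2 * |inner ℝ (v y) u| + C * (2 * ‖u‖) ^ 2 := by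
      have := abs_sub_abs_le_abs_sub (D (y + (2:ℝ) • u) - D y) (2 * inner ℝ (v y) u)
      rw [abs_mul, abs_two] at this
      linarith
    rw [abs_mul, abs_neg, abs_of_pos hk] at a1
    set Δ := D (y + (2:ℝ) • u) - D y
    have a5 : (-k * Δ) ^ 2 ≤ k ^ 2 * (4 * ‖u‖ ^ 2) := by
      have := pow_le_pow_left₀ (abs_nonneg _) a3 2
      rw [sq_abs] at this
      have := mul_le_mul_of_nonneg_left this (sq_nonneg k)
      linarith
    have a6 : ph (h y) * (k * |Δ|) ≤ ph (h y) * (k * (2 * |inner ℝ (v y) u|)) + k * (C * (2 * ‖u‖) ^ 2) := by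
      have p0 := ph_pos (h y)
      have p1 := ph_le_one (h y)
      have b1 : k * |Δ| ≤ k * (2 * |inner ℝ (v y) u|) + k * (C * (2 * ‖u‖) ^ 2) := by
        rw [← mul_add]; exact mul_le_mul_of_nonneg_left a4 hk.le
      have b2 := mul_le_mul_of_nonneg_left b1 p0.le
      have b3 : 0 ≤ k * (C * (2 * ‖u‖) ^ 2) := by positivity
      have b4 : ph (h y) * (k * (C * (2 * ‖u‖) ^ 2)) ≤ k * (C * (2 * ‖u‖) ^ 2) :=
        mul_le_of_le_one_left b3 p1
      linarith
    simp only [w, hK]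
    linarith
  have hw : ∀ l : List EE, ∀ u ∈ l, ∀ y, |Ph (h (y + (u + u))) - Ph (h y)| ≤ 2 * w u y ∧
      |Ph (h (y + (-u + -u))) - Ph (h y)| ≤ 2 * w u y := by
    intro l u _ y
    refine ⟨hstep u y, ?_⟩
    have := hstep (-u) y
    simpa [w] using this
  -- error term
  let err : ℕ → ℝ := fun N => √(n * (2 * k * K * (√N)⁻¹ + K ^ 2 * (√N)⁻¹ ^ 2))
  have herr : Tendsto err atTop (𝓝 0) := by
    have t0 : Tendsto (fun N : ℕ => (√(N:ℝ))⁻¹) atTop (𝓝 0) :=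
      tendsto_inv_atTop_zero.comp (Real.tendsto_sqrt_atTop.comp tendsto_natCast_atTop_atTop)
    have : Continuous fun t : ℝ => √(n * (2 * k * K * t + K ^ 2 * t ^ 2)) := by fun_prop
    have := (this.tendsto 0).comp t0
    simp only [mul_zero, ne_eq, OfNat.ofNat_ne_zero, not_false_eq_true, zero_pow, add_zero,
      Real.sqrt_zero] at this
    exact this
  have hpt : ∀ N : ℕ, 0 < N → ∀ y,
      √(J (Ph (h y)) ^ 2 + ((LL n N).map fun u => w u y ^ 2).sum) ≤
        √(1 + k ^ 2) * ph (h y) + err N := by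
    intro N hN y
    have hN' : (0:ℝ) < √N := Real.sqrt_pos.2 (by exact_mod_cast hN)
    have e1 : J (Ph (h y)) = ph (h y) := by rw [J, q_Ph]
    have e2 : ((LL n N).map fun u => w u y ^ 2).sum =
        ∑ i, (ph (h y) * k * |v y i| + K * (√N)⁻¹) ^ 2 := by
      rw [LL, flat_sum, ← Fin.sum_univ_def]
      refine Finset.sum_congr rfl fun i _ => ?_
      simp only [w, EuclideanSpace.inner_single_right, PiLp.norm_single, nsmul_eq_mul]
      simp only [conj_trivial, abs_mul, norm_inv, Real.norm_eq_abs, abs_inv, abs_of_pos hN']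
      have : (N:ℝ) = √N ^ 2 := (Real.sq_sqrt (by positivity)).symm
      rw [this, Real.sqrt_sq hN'.le]
      field_simp
    set α := ph (h y) * k with hα
    have hα0 : 0 ≤ α := mul_nonneg (ph_pos _).le hk.le
    have hαk : α ≤ k := mul_le_of_le_one_left hk.le (ph_le_one _)
    set t := (√(N:ℝ))⁻¹ with ht
    have ht0 : 0 ≤ t := by positivity
    have hvs : ∑ i, v y i ^ 2 ≤ 1 := by
      have := EuclideanSpace.real_norm_sq_eq (v y)
      rw [← this]
      exact pow_le_one₀ (norm_nonneg _) (hv1 y)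
    have hvi : ∀ i, |v y i| ≤ 1 := by
      intro i
      have := PiLp.norm_apply_le (v y) i
      exact this.trans (hv1 y)
    have e3 : ∑ i, (α * |v y i| + K * t) ^ 2 ≤ α ^ 2 + n * (2 * k * K * t + K ^ 2 * t ^ 2) := by
      calc ∑ i, (α * |v y i| + K * t) ^ 2
          ≤ ∑ i, (α ^ 2 * v y i ^ 2 + (2 * k * K * t + K ^ 2 * t ^ 2)) := by
            refine Finset.sum_le_sum fun i _ => ?_
            have b1 : α * |v y i| ≤ k := by
              have := mul_le_mul hαk (hvi i) (abs_nonneg _) hk.le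
              linarith
            have b2 := mul_le_mul_of_nonneg_right b1 (mul_nonneg hK0 ht0)
            have b3 : (α * |v y i| + K * t) ^ 2 =
              α ^ 2 * |v y i| ^ 2 + 2 * (α * |v y i| * (K * t)) + K ^ 2 * t ^ 2 := by ring
            rw [b3, sq_abs]; linarith
        _ = α ^ 2 * ∑ i, v y i ^ 2 + n * (2 * k * K * t + K ^ 2 * t ^ 2) := by
            rw [Finset.sum_add_distrib, ← Finset.mul_sum]; simp; ring
        _ ≤ _ := by
            have := mul_le_mul_of_nonneg_left hvs (sq_nonneg α)
            linarith
    rw [e1, e2]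
    calc √(ph (h y) ^ 2 + ∑ i, (α * |v y i| + K * t) ^ 2)
        ≤ √((1 + k ^ 2) * ph (h y) ^ 2 + n * (2 * k * K * t + K ^ 2 * t ^ 2)) := by
          apply Real.sqrt_le_sqrt
          have : (1 + k ^ 2) * ph (h y) ^ 2 = ph (h y) ^ 2 + α ^ 2 := by rw [hα]; ring
          linarith
      _ ≤ √((1 + k ^ 2) * ph (h y) ^ 2) + √(n * (2 * k * K * t + K ^ 2 * t ^ 2)) :=
          sqrt_sub' (by positivity) (by positivity)
      _ = _ := by
          rw [Real.sqrt_mul (by positivity), Real.sqrt_sq (ph_pos _).le]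
  obtain ⟨hint0, hint1⟩ := int01 n hhc
  have L1 := clt_int n (Ph_cont.comp hhc) (C := 1) (fun x => by
    rw [Function.comp, Real.norm_eq_abs, abs_of_pos (hf0 x)]; exact (hf1 x).le)
  have L2 := ((hasDeriv_J hint0 hint1).continuousAt.tendsto).comp L1
  have L3 := (clt_int n (g := fun y => √(1 + k ^ 2) * ph (h y))
    ((ph_cont.comp hhc).const_mul _) (C := √(1 + k ^ 2)) (fun x => by
      rw [norm_mul, Real.norm_eq_abs, Real.norm_eq_abs, abs_of_pos (ph_pos _),
        abs_of_nonneg (Real.sqrt_nonneg _)]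
      exact mul_le_of_le_one_right (Real.sqrt_nonneg _) (ph_le_one _))).add herr
  rw [integral_const_mul, add_zero] at L3
  refine le_of_tendsto_of_tendsto L2 L3 ?_
  filter_upwards [eventually_gt_atTop 0] with N hN
  have c1 := cube (LL n N) hf0 hf1 (hw _) 0
  have c2 := Av_mono (LL n N) (hpt N hN) 0
  rw [Av_add, Av_const] at c2
  exact c1.trans c2
end bob

section smooth
variable (n : ℕ)
local notation "EE" => EuclideanSpace ℝ (Fin n)
open scoped Convolution

lemma conv_lip {F G : Type*} [NormedAddCommGroup F] [NormedSpace ℝ F] [NormedAddCommGroup G]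
    [NormedSpace ℝ G] (L : G →L[ℝ] ℝ →L[ℝ] F) {f : EE → G} (hf : Continuous f)
    (hfc : HasCompactSupport f) {d : EE → ℝ} (hd : ∀ x y, |d x - d y| ≤ ‖x - y‖) (x y : EE) :
    ‖(f ⋆[L, volume] d) x - (f ⋆[L, volume] d) y‖ ≤ (‖L‖ * ∫ t, ‖f t‖) * ‖x - y‖ := by
  have hdc : Continuous d := Ph_comp_cont n hd
  have ex := hfc.convolutionExists_left (μ := volume) L hf hdc.locallyIntegrable
  rw [convolution, convolution, ← integral_sub (ex x).integrable (ex y).integrable]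
  have hfi : Integrable f := hf.integrable_of_hasCompactSupport hfc
  have : (‖L‖ * ∫ t, ‖f t‖) * ‖x - y‖ = ∫ t, ‖L‖ * ‖f t‖ * ‖x - y‖ := by
    rw [integral_mul_const, integral_const_mul]
  rw [this]
  refine norm_integral_le_of_norm_le ((hfi.norm.const_mul _).mul_const _)
    (Eventually.of_forall fun t => ?_)
  rw [← map_sub]
  refine (L.le_opNorm₂ _ _).trans ?_
  have := hd (x - t) (y - t)
  rw [sub_sub_sub_cancel_right] at this
  exact mul_le_mul_of_nonneg_left this (by positivity)

lemma conv_lip' {F G : Type*} [NormedAddCommGroup F] [NormedSpace ℝ F] [NormedAddCommGroup G]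
    [NormedSpace ℝ G] (L : G →L[ℝ] ℝ →L[ℝ] F) {f : EE → G} (hf : Continuous f)
    (hfc : HasCompactSupport f) {d : EE → ℝ} (hd : ∀ x y, |d x - d y| ≤ ‖x - y‖) :
    ∃ C : ℝ, 0 ≤ C ∧ ∀ x y, ‖(f ⋆[L, volume] d) x - (f ⋆[L, volume] d) y‖ ≤ C * ‖x - y‖ :=
  ⟨‖L‖ * ∫ t, ‖f t‖, mul_nonneg L.opNorm_nonneg (integral_nonneg fun _ => norm_nonneg _),
    conv_lip n L hf hfc hd⟩

lemma smoothing {d : EE → ℝ} (hd : ∀ x y, |d x - d y| ≤ ‖x - y‖) {δ : ℝ} (hδ : 0 < δ) :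
    ∃ D : EE → ℝ, ∃ C : ℝ, 0 ≤ C ∧ (∀ x, |D x - d x| ≤ δ) ∧ (∀ x y, |D x - D y| ≤ ‖x - y‖) ∧
    (∀ y, ∃ v : EE, ‖v‖ ≤ 1 ∧ ∀ z, |D (y + z) - D y - inner ℝ v z| ≤ C * ‖z‖ ^ 2) := by
  have hdc : Continuous d := Ph_comp_cont n hd
  let ρ : ContDiffBump (0 : EE) := ⟨δ / 2, δ, by positivity, by linarith⟩
  set r := ρ.normed volume with hr
  have hrc : HasCompactSupport r := ρ.hasCompactSupport_normed
  have hrd : ContDiff ℝ 1 r := ρ.contDiff_normed (n := 1)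
  set D : EE → ℝ := r ⋆[ContinuousLinearMap.lsmul ℝ ℝ, volume] d with hD
  have hDl : ∀ x y, |D x - D y| ≤ ‖x - y‖ := by
    intro x y
    have := conv_lip n (ContinuousLinearMap.lsmul ℝ ℝ) hrd.continuous hrc hd x y
    have e : ∫ t, ‖r t‖ = 1 := by
      rw [← ρ.integral_normed (μ := volume)]
      congr 1; ext t
      rw [Real.norm_of_nonneg (ρ.nonneg_normed t)]
    rw [e, mul_one] at this
    refine this.trans ?_
    have h1 : ‖(ContinuousLinearMap.lsmul ℝ ℝ : ℝ →L[ℝ] ℝ →L[ℝ] ℝ)‖ ≤ 1 :=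
      ContinuousLinearMap.opNorm_lsmul_le
    exact mul_le_of_le_one_left (norm_nonneg _) h1
  have hfd : ∀ x, HasFDerivAt D _ x :=
    hrc.hasFDerivAt_convolution_left (μ := volume) (ContinuousLinearMap.lsmul ℝ ℝ) hrd
      hdc.locallyIntegrable
  set M := (ContinuousLinearMap.lsmul ℝ ℝ : ℝ →L[ℝ] ℝ →L[ℝ] ℝ).precompL EE with hM
  set D' := fderiv ℝ r ⋆[M, volume] d with hD'
  obtain ⟨C, hC0, hD'l⟩ : ∃ C : ℝ, 0 ≤ C ∧ ∀ x y, ‖D' x - D' y‖ ≤ C * ‖x - y‖ :=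
    conv_lip' n M (hrd.continuous_fderiv one_ne_zero) (hrc.fderiv ℝ) hd
  refine ⟨D, C, hC0, ?_, hDl, ?_⟩
  · intro x
    refine ρ.dist_normed_convolution_le hdc.aestronglyMeasurable ?_
    intro y hy
    rw [Real.dist_eq]
    refine (hd y x).trans ?_
    rw [← dist_eq_norm]
    exact (Metric.mem_ball.1 hy).le
  · intro y
    have hlip : LipschitzWith 1 D := LipschitzWith.of_dist_le_mul fun x y => by
      simpa [Real.dist_eq, dist_eq_norm] using hDl x y
    refine ⟨(InnerProductSpace.toDual ℝ EE).symm (D' y), ?_, ?_⟩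
    · rw [LinearIsometryEquiv.norm_map]
      simpa using (hfd y).le_of_lipschitz hlip
    · intro z
      rw [InnerProductSpace.toDual_symm_apply]
      have := (convex_closedBall y ‖z‖).norm_image_sub_le_of_norm_hasFDerivWithin_le' (𝕜 := ℝ)
        (f := D) (f' := D') (φ := D' y) (C := C * ‖z‖) (x := y) (y := y + z)
        (fun x _ => (hfd x).hasFDerivWithinAt) (fun x hx => ?_) (by simp) (by simp)
      · rw [add_sub_cancel_left, Real.norm_eq_abs] at this
        rw [sq, ← mul_assoc]; exact this
      · refine (hD'l x y).trans (mul_le_mul_of_nonneg_left ?_ hC0)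
        rw [← dist_eq_norm]; exact hx
end smooth

section endgame
variable (n : ℕ)
local notation "EE" => EuclideanSpace ℝ (Fin n)

lemma growth {D : EE → ℝ} {C : ℝ} (hC : 0 ≤ C) (hD : ∀ x y, |D x - D y| ≤ ‖x - y‖)
    (hD2 : ∀ y, ∃ v : EE, ‖v‖ ≤ 1 ∧ ∀ z, |D (y + z) - D y - inner ℝ v z| ≤ C * ‖z‖ ^ 2)
    {k : ℝ} (hk : 0 < k) {s0 s1 b : ℝ} (hs : s0 ≤ s1)
    (hb : Ph b ≤ ∫ x, Ph (k * (s0 - D x)) ∂(gam n)) :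
    Ph (b + k / √(1 + k ^ 2) * (s1 - s0)) ≤ ∫ x, Ph (k * (s1 - D x)) ∂(gam n) := by
  have hDc := Ph_comp_cont n hD
  set F : ℝ → ℝ := fun s => ∫ x, Ph (k * (s - D x)) ∂(gam n) with hF
  have h01 : ∀ s, 0 < F s ∧ F s < 1 := fun s => int01 n (by fun_prop)
  have hdF : ∀ s, HasDerivAt F (k * ∫ x, ph (k * (s - D x)) ∂(gam n)) s := by
    intro s
    rw [← integral_const_mul]
    refine (hasDerivAt_integral_of_dominated_loc_of_deriv_le (bound := fun _ => k)
      (F := fun s x => Ph (k * (s - D x))) (F' := fun s x => k * ph (k * (s - D x)))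
      (s := univ) univ_mem ?_ ?_ ?_ ?_ (integrable_const _) ?_).2
    · exact Eventually.of_forall fun s => (Ph_integrable n (by fun_prop)).aestronglyMeasurable
    · exact Ph_integrable n (by fun_prop)
    · exact ((ph_cont.comp (by fun_prop)).const_mul k).aestronglyMeasurable
    · refine Eventually.of_forall fun x s _ => ?_
      rw [norm_mul, Real.norm_eq_abs, Real.norm_eq_abs, abs_of_pos (ph_pos _), abs_of_pos hk]
      exact mul_le_of_le_one_right hk.le (ph_le_one _)
    · refine Eventually.of_forall fun x s _ => ?_
      have h1 : HasDerivAt (fun s => k * (s - D x)) k s := by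
        simpa using ((hasDerivAt_id s).sub_const (D x)).const_mul k
      have := (hasDeriv_Ph (k * (s - D x))).comp s h1
      refine this.congr_deriv ?_
      ring
  set ρ := k / √(1 + k ^ 2) with hρ
  have hsq : 0 < √(1 + k ^ 2) := by positivity
  have hmono : Monotone fun s => q (F s) - ρ * s := by
    refine monotone_of_hasDerivAt_nonneg
      (f' := fun s => (J (F s))⁻¹ * (k * ∫ x, ph (k * (s - D x)) ∂(gam n)) - ρ) (fun s => ?_) ?_
    · have h1 := (hasDeriv_q (h01 s).1 (h01 s).2).comp s (hdF s)
      have h2 : HasDerivAt (fun s => ρ * s) ρ s := by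
        simpa using (hasDerivAt_id s).const_mul ρ
      exact h1.sub h2
    · intro s
      have hJ := J_pos (F s)
      have hb := bob n hC hD hD2 hk s
      change J (F s) ≤ _ at hb
      simp only [Pi.zero_apply, sub_nonneg]
      rw [hρ, div_le_iff₀ hsq, inv_mul_eq_div, div_mul_eq_mul_div, le_div_iff₀ hJ]
      have := mul_le_mul_of_nonneg_left hb hk.le
      linarith
  have h1 := hmono hs
  simp only at h1
  have h2 : b ≤ q (F s0) := by
    rw [← Ph_strictMono.le_iff_le, Ph_q (h01 _).1 (h01 _).2]; exact hb
  calc Ph (b + ρ * (s1 - s0)) ≤ Ph (q (F s1)) := Ph_strictMono.monotone (by linarith)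
    _ = F s1 := Ph_q (h01 _).1 (h01 _).2

lemma rho_tendsto : Tendsto (fun k : ℝ => k / √(1 + k ^ 2)) atTop (𝓝 1) := by
  have h : Tendsto (fun k : ℝ => √(1 - (1 + k ^ 2)⁻¹)) atTop (𝓝 1) := by
    have h1 : Tendsto (fun k : ℝ => (1 + k ^ 2)⁻¹) atTop (𝓝 0) :=
      tendsto_inv_atTop_zero.comp
        (tendsto_atTop_add_const_left _ _ (tendsto_pow_atTop (by norm_num)))
    have := (Real.continuous_sqrt.tendsto _).comp (h1.const_sub 1)
    simp only [sub_zero, Real.sqrt_one] at this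
    exact this
  refine h.congr' ?_
  filter_upwards [eventually_gt_atTop 0] with k hk
  have : 1 - (1 + k ^ 2)⁻¹ = k ^ 2 / (1 + k ^ 2) := by field_simp; ring
  rw [this, Real.sqrt_div (by positivity), Real.sqrt_sq hk.le]

lemma compact_case {K : Set EE} (hK : IsCompact K) {b ε : ℝ} (hε : 0 < ε)
    (hb : Ph b < (gam n).real K) :
    Ph (b + ε) ≤ (gam n).real {x | ∃ y ∈ K, ‖x - y‖ ≤ ε} := by
  have hne : K.Nonempty := by
    rw [nonempty_iff_ne_empty]; rintro rfl
    simp at hb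
    exact absurd hb (Ph_pos b).le.not_gt
  set d : EE → ℝ := fun x => Metric.infDist x K with hd
  have hdl : ∀ x y, |d x - d y| ≤ ‖x - y‖ := by
    intro x y
    have := (Metric.lipschitz_infDist_pt K).dist_le_mul x y
    simpa [Real.dist_eq, dist_eq_norm] using this
  have hset : {x | ∃ y ∈ K, ‖x - y‖ ≤ ε} = {x | d x ≤ ε} := by
    ext x
    constructor
    · rintro ⟨y, hy, h⟩
      rw [← dist_eq_norm] at h
      exact (Metric.infDist_le_dist_of_mem hy).trans h
    · intro h
      obtain ⟨y, hy, e⟩ := hK.exists_infDist_eq_dist hne x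
      refine ⟨y, hy, ?_⟩
      rw [← dist_eq_norm, ← e]; exact h
  rw [hset]
  have hdc : Continuous d := Ph_comp_cont n hdl
  set S := {x | d x ≤ ε} with hS
  have hSm : MeasurableSet S := (isClosed_le hdc continuous_const).measurableSet
  have key : ∀ η, 0 < η → 4 * η < ε → Ph (b + (ε - 4 * η)) ≤ (gam n).real S := by
    intro η hη hηε
    obtain ⟨D, C, hC, hDd, hDl, hD2⟩ := smoothing n hdl hη
    have hDc : Continuous D := Ph_comp_cont n hDl
    have tk : Tendsto (fun k : ℝ => k * η) atTop atTop := tendsto_id.atTop_mul_const hη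
    have t1 : Tendsto (fun k : ℝ => Ph (k * η)) atTop (𝓝 1) := Ph_tendsto_top.comp tk
    have t2 : Tendsto (fun k : ℝ => (gam n).real S + (1 - Ph (k * η))) atTop
        (𝓝 ((gam n).real S)) := by
      simpa using (t1.const_sub 1).const_add ((gam n).real S)
    have t3 : Tendsto (fun k : ℝ => Ph (b + k / √(1 + k ^ 2) * (ε - 2 * η - 2 * η))) atTop
        (𝓝 (Ph (b + (ε - 4 * η)))) := by
      have := (Ph_cont.tendsto _).comp ((rho_tendsto.mul_const (ε - 2 * η - 2 * η)).const_add b)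
      rw [show b + 1 * (ε - 2 * η - 2 * η) = b + (ε - 4 * η) by ring] at this
      exact this
    have t4 : ∀ᶠ k in atTop, Ph b < (gam n).real K * Ph (k * η) := by
      have := t1.const_mul ((gam n).real K)
      rw [mul_one] at this
      exact this.eventually (lt_mem_nhds hb)
    refine le_of_tendsto_of_tendsto t3 t2 ?_
    filter_upwards [eventually_gt_atTop 0, t4] with k hk hk4
    have hi : ∀ s, Integrable (fun x => Ph (k * (s - D x))) (gam n) := fun s =>
      Ph_integrable n (by fun_prop)
    refine (growth n hC hDl hD2 hk (s0 := 2 * η) (s1 := ε - 2 * η) (b := b) (by linarith) ?_).trans ?_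
    · refine hk4.le.trans ?_
      calc (gam n).real K * Ph (k * η) = ∫ x, K.indicator (fun _ => Ph (k * η)) x ∂(gam n) := by
            rw [integral_indicator hK.measurableSet, setIntegral_const, smul_eq_mul]
        _ ≤ _ := by
            refine integral_mono ((integrable_const _).indicator hK.measurableSet) (hi _) fun x => ?_
            by_cases hx : x ∈ K
            · simp only [indicator_of_mem hx]
              apply Ph_strictMono.monotone
              apply mul_le_mul_of_nonneg_left _ hk.le
              have h1 := (abs_le.1 (hDd x)).2
              have h2 : d x = 0 := Metric.infDist_zero_of_mem hx
              linarith
            · simp only [indicator_of_notMem hx]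
              exact (Ph_pos _).le
    · calc ∫ x, Ph (k * (ε - 2 * η - D x)) ∂(gam n)
          ≤ ∫ x, (S.indicator (fun _ => (1:ℝ)) x + (1 - Ph (k * η))) ∂(gam n) := by
            refine integral_mono (hi _)
              (((integrable_const _).indicator hSm).add (integrable_const _)) fun x => ?_
            by_cases hx : x ∈ S
            · simp only [indicator_of_mem hx]
              have := Ph_lt_one (k * (ε - 2 * η - D x))
              have := Ph_lt_one (k * η)
              linarith
            · simp only [indicator_of_notMem hx, zero_add]
              rw [← Ph_neg]
              apply Ph_strictMono.monotone
              rw [← mul_neg]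
              apply mul_le_mul_of_nonneg_left _ hk.le
              have h1 := (abs_le.1 (hDd x)).1
              have h2 : ε < d x := not_le.1 hx
              linarith
        _ = _ := by
            rw [integral_add ((integrable_const _).indicator hSm) (integrable_const _),
              integral_indicator hSm, setIntegral_const]
            simp
  have t : Tendsto (fun η : ℝ => Ph (b + (ε - 4 * η))) (𝓝[>] 0) (𝓝 (Ph (b + ε))) := by
    have : Continuous fun η : ℝ => Ph (b + (ε - 4 * η)) := Ph_cont.comp (by fun_prop)
    have := this.tendsto 0
    simp only [mul_zero, sub_zero] at this
    exact this.mono_left nhdsWithin_le_nhds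
  refine le_of_tendsto t ?_
  have h4 : ∀ᶠ η : ℝ in 𝓝[>] 0, η < ε / 4 :=
    nhdsWithin_le_nhds (gt_mem_nhds (by positivity))
  filter_upwards [self_mem_nhdsWithin, h4] with η h1 h2
  exact key η h1 (by linarith)

end endgame
end GI

theorem gaussian_isoperimetric (n : ℕ) (A : Set (Fin n → ℝ)) (hA : MeasurableSet A)
    (a : ℝ) (ε : ℝ) (hε : 0 ≤ ε)
    (hμA : (Measure.pi fun _ : Fin n => gaussianReal 0 1) A =
      ENNReal.ofReal (stdNormalCDF a)) :
    (Measure.pi fun _ : Fin n => gaussianReal 0 1)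
        {x | ∃ y ∈ A, Real.sqrt (∑ i, (x i - y i) ^ 2) ≤ ε} ≥
      ENNReal.ofReal (stdNormalCDF (a + ε)) := by
  rcases hε.eq_or_lt with rfl | hε
  · rw [add_zero, ← hμA]
    exact measure_mono fun x hx => ⟨x, hx, by simp⟩
  have hml : Measurable (WithLp.toLp 2 : (Fin n → ℝ) → EuclideanSpace ℝ (Fin n)) := by fun_prop
  set T := {x : Fin n → ℝ | ∃ y ∈ A, Real.sqrt (∑ i, (x i - y i) ^ 2) ≤ ε} with hT
  set A' : Set (EuclideanSpace ℝ (Fin n)) := {x | x.ofLp ∈ A} with hA'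
  have hA'm : MeasurableSet A' := by
    have : Measurable (WithLp.ofLp : EuclideanSpace ℝ (Fin n) → (Fin n → ℝ)) := by fun_prop
    exact this hA
  have hgA : GI.gam n A' = ENNReal.ofReal (stdNormalCDF a) := by
    rw [GI.gam, Measure.map_apply hml hA'm, ← hμA]; rfl
  have key : ∀ η : ℝ, 0 < η → ENNReal.ofReal (stdNormalCDF (a - η + ε)) ≤
      (Measure.pi fun _ : Fin n => gaussianReal 0 1) T := by
    intro η hη
    have hlt : ENNReal.ofReal (stdNormalCDF (a - η)) < GI.gam n A' := by
      rw [hgA, ENNReal.ofReal_lt_ofReal_iff (GI.Ph_pos a)]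
      exact GI.Ph_strictMono (by linarith)
    obtain ⟨K, hKA, hK, hKm⟩ := hA'm.exists_lt_isCompact hlt
    have hb : stdNormalCDF (a - η) < (GI.gam n).real K := by
      rw [Measure.real, ← ENNReal.ofReal_lt_iff_lt_toReal (GI.Ph_pos _).le (measure_ne_top _ _)]
      exact hKm
    have h1 := GI.compact_case n hK hε hb
    have h2 : ENNReal.ofReal (stdNormalCDF (a - η + ε)) ≤
        GI.gam n {x | ∃ y ∈ K, ‖x - y‖ ≤ ε} :=
      ENNReal.ofReal_le_of_le_toReal h1
    refine h2.trans ?_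
    have hcl : MeasurableSet {x : EuclideanSpace ℝ (Fin n) | ∃ y ∈ K, ‖x - y‖ ≤ ε} := by
      have : {x : EuclideanSpace ℝ (Fin n) | ∃ y ∈ K, ‖x - y‖ ≤ ε} = Metric.cthickening ε K := by
        rw [hK.cthickening_eq_biUnion_closedBall hε.le]
        ext x; simp [dist_eq_norm]
      rw [this]; exact Metric.isClosed_cthickening.measurableSet
    rw [GI.gam, Measure.map_apply hml hcl]
    refine measure_mono ?_
    rintro x ⟨y, hy, hxy⟩
    refine ⟨y.ofLp, hKA hy, ?_⟩
    rw [EuclideanSpace.norm_eq] at hxy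
    simpa using hxy
  have t : Filter.Tendsto (fun η : ℝ => ENNReal.ofReal (stdNormalCDF (a - η + ε)))
      (nhdsWithin 0 (Set.Ioi 0)) (nhds (ENNReal.ofReal (stdNormalCDF (a + ε)))) := by
    have : Continuous fun η : ℝ => ENNReal.ofReal (stdNormalCDF (a - η + ε)) :=
      ENNReal.continuous_ofReal.comp (GI.Ph_cont.comp (by fun_prop))
    have := this.tendsto 0
    simp only [sub_zero] at this
    exact this.mono_left nhdsWithin_le_nhds
  refine le_of_tendsto t ?_
  filter_upwards [self_mem_nhdsWithin] with η h1
  exact key η h1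
end

section
/- (Isoperimetric inequality on the cube) Let A ⊂ [0,1]ⁿ be measurable with volume vol[A], let p > 0, p* = min(p,2), and α satisfy Φ(α) = vol[A]. Then the ℓ_p ε-expansion of A within the cube satisfies vol[A(ε, d_p)] ≥ Φ(α + √(2πn)·ε/n^{1/p*}). -/
open Real MeasureTheory

/-- The ℓ_p distance on ℝⁿ (for p > 0). -/
noncomputable def lpDist {n : ℕ} (p : ℝ) (x y : Fin n → ℝ) : ℝ :=
  (∑ i, |x i - y i| ^ p) ^ (1 / p)

section Helpers
open Filter Topology ProbabilityTheory

namespace CubeIso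

noncomputable def ph (t : ℝ) : ℝ := (Real.sqrt (2 * Real.pi))⁻¹ * Real.exp (-t ^ 2 / 2)

lemma ph_pos (t : ℝ) : 0 < ph t := by unfold ph; positivity

lemma ph_eq (t : ℝ) : ph t = gaussianPDFReal 0 1 t := by
  simp [ph, gaussianPDFReal]

lemma ph_cont : Continuous ph := by unfold ph; fun_prop

lemma ph_integrable : Integrable ph := by
  rw [show ph = gaussianPDFReal 0 1 from funext ph_eq]
  exact integrable_gaussianPDFReal 0 1

lemma cdf_eq (z : ℝ) : stdNormalCDF z = ∫ t in Set.Iic z, ph t := by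
  simp only [stdNormalCDF, ph]
  rw [integral_const_mul]

lemma ph_neg (t : ℝ) : ph (-t) = ph t := by simp [ph]

lemma ph_hasDerivAt (t : ℝ) : HasDerivAt ph (-t * ph t) t := by
  unfold ph
  have : HasDerivAt (fun t : ℝ => -t ^ 2 / 2) (-t) t := by
    have := ((hasDerivAt_pow 2 t).neg).div_const 2
    exact this.congr_deriv (by simp; ring)
  exact (this.exp.const_mul (Real.sqrt (2 * Real.pi))⁻¹).congr_deriv (by ring)

lemma ph_le (s t : ℝ) (h : |s| ≤ |t|) : ph t ≤ ph s := by
  unfold ph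
  have := sq_le_sq.2 h
  gcongr

lemma ph_le_zero (t : ℝ) : ph t ≤ ph 0 := ph_le _ _ (by simp)

lemma ph_zero : ph 0 = (Real.sqrt (2 * Real.pi))⁻¹ := by simp [ph]

lemma cdf_hasStrictDerivAt (z : ℝ) : HasStrictDerivAt stdNormalCDF (ph z) z := by
  have h1 : stdNormalCDF = fun z => stdNormalCDF 0 + ∫ t in (0:ℝ)..z, ph t := by
    funext z
    rw [cdf_eq, cdf_eq, ← intervalIntegral.integral_Iic_sub_Iic ph_integrable.integrableOn
      ph_integrable.integrableOn]
    ring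
  rw [h1]
  refine HasStrictDerivAt.const_add _ ?_
  exact intervalIntegral.integral_hasStrictDerivAt_right
    (ph_integrable.intervalIntegrable)
    (ph_cont.stronglyMeasurableAtFilter _ _) ph_cont.continuousAt

lemma cdf_hasDerivAt (z : ℝ) : HasDerivAt stdNormalCDF (ph z) z :=
  (cdf_hasStrictDerivAt z).hasDerivAt

lemma cdf_eq_cdf : stdNormalCDF = cdf (gaussianReal 0 1) := by
  funext z
  rw [cdf_eq, cdf_eq_real, measureReal_def, gaussianReal_apply_eq_integral 0 (by simp),
    ENNReal.toReal_ofReal]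
  · simp_rw [ph_eq]
  · exact integral_nonneg fun t => gaussianPDFReal_nonneg _ _ _

lemma cdf_cont : Continuous stdNormalCDF :=
  continuous_iff_continuousAt.2 fun z => (cdf_hasDerivAt z).continuousAt

lemma cdf_strictMono : StrictMono stdNormalCDF :=
  strictMono_of_hasDerivAt_pos cdf_hasDerivAt ph_pos

lemma cdf_atTop : Tendsto stdNormalCDF atTop (𝓝 1) := by
  rw [cdf_eq_cdf]; exact tendsto_cdf_atTop _

lemma cdf_atBot : Tendsto stdNormalCDF atBot (𝓝 0) := by
  rw [cdf_eq_cdf]; exact tendsto_cdf_atBot _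

lemma cdf_pos (z : ℝ) : 0 < stdNormalCDF z := by
  have h1 : 0 ≤ stdNormalCDF (z - 1) := by rw [cdf_eq_cdf]; exact cdf_nonneg _ _
  exact h1.trans_lt (cdf_strictMono (by linarith))

lemma cdf_lt_one (z : ℝ) : stdNormalCDF z < 1 := by
  have h1 : stdNormalCDF (z + 1) ≤ 1 := by rw [cdf_eq_cdf]; exact cdf_le_one _ _
  exact (cdf_strictMono (by linarith)).trans_le h1

lemma cdf_neg (t : ℝ) : stdNormalCDF (-t) = 1 - stdNormalCDF t := by
  have hd : ∀ t, HasDerivAt (fun t => stdNormalCDF t + stdNormalCDF (-t)) 0 t := by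
    intro t
    have h2 := (cdf_hasDerivAt (-t)).comp t (hasDerivAt_neg t)
    exact ((cdf_hasDerivAt t).add h2).congr_deriv (by rw [ph_neg]; ring)
  have hc := fun x y => is_const_of_deriv_eq_zero (fun t => (hd t).differentiableAt)
    (fun t => (hd t).deriv) x y
  have hl : Tendsto (fun t => stdNormalCDF t + stdNormalCDF (-t)) atTop (𝓝 (1 + 0)) :=
    cdf_atTop.add (cdf_atBot.comp tendsto_neg_atTop_atBot)
  have h3 : Tendsto (fun _ : ℝ => stdNormalCDF t + stdNormalCDF (-t)) atTop (𝓝 (1 + 0)) :=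
    hl.congr fun s => hc s t
  have := tendsto_nhds_unique h3 tendsto_const_nhds
  linarith

lemma cdf_surj {y : ℝ} (h : y ∈ Set.Ioo (0:ℝ) 1) : ∃ t, stdNormalCDF t = y := by
  obtain ⟨a, ha⟩ := (cdf_atBot.eventually (gt_mem_nhds h.1)).exists
  obtain ⟨b, hb⟩ := (cdf_atTop.eventually (lt_mem_nhds h.2)).exists
  exact mem_range_of_exists_le_of_exists_ge cdf_cont ⟨a, ha.le⟩ ⟨b, hb.le⟩

noncomputable def Q (y : ℝ) : ℝ := Function.invFun stdNormalCDF y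

lemma Q_cdf (t : ℝ) : Q (stdNormalCDF t) = t :=
  Function.leftInverse_invFun cdf_strictMono.injective t

lemma cdf_Q {y : ℝ} (h : y ∈ Set.Ioo (0:ℝ) 1) : stdNormalCDF (Q y) = y :=
  Function.invFun_eq (cdf_surj h)

lemma cdf_mem (t : ℝ) : stdNormalCDF t ∈ Set.Ioo (0:ℝ) 1 := ⟨cdf_pos t, cdf_lt_one t⟩

noncomputable def I (y : ℝ) : ℝ := ph (Q y)

lemma I_pos (y : ℝ) : 0 < I y := ph_pos _

lemma I_cdf (t : ℝ) : I (stdNormalCDF t) = ph t := by rw [I, Q_cdf]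

lemma Q_hasDerivAt {y : ℝ} (h : y ∈ Set.Ioo (0:ℝ) 1) : HasDerivAt Q (I y)⁻¹ y := by
  have := HasStrictDerivAt.to_local_left_inverse (g := Q) (cdf_hasStrictDerivAt (Q y))
    (ph_pos _).ne' (Eventually.of_forall Q_cdf)
  rw [cdf_Q h] at this
  exact this.hasDerivAt

lemma I_hasDerivAt {y : ℝ} (h : y ∈ Set.Ioo (0:ℝ) 1) : HasDerivAt I (-Q y) y := by
  have := (ph_hasDerivAt (Q y)).comp y (Q_hasDerivAt h)
  refine this.congr_deriv ?_
  have h2 := (I_pos y).ne'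
  change -Q y * I y * (I y)⁻¹ = _
  field_simp

lemma Q_le {x y : ℝ} (hx : x ∈ Set.Ioo (0:ℝ) 1) (hy : y ∈ Set.Ioo (0:ℝ) 1) (h : x ≤ y) :
    Q x ≤ Q y := by
  rw [← cdf_strictMono.le_iff_le, cdf_Q hx, cdf_Q hy]; exact h

lemma Q_symm {y : ℝ} (h : y ∈ Set.Ioo (0:ℝ) 1) : Q (1 - y) = -Q y := by
  conv_lhs => rw [← cdf_Q h, ← cdf_neg, Q_cdf]

lemma I_symm {y : ℝ} (h : y ∈ Set.Ioo (0:ℝ) 1) : I (1 - y) = I y := by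
  rw [I, Q_symm h, ph_neg, I]

lemma mono_aux {f f' : ℝ → ℝ} {a b : ℝ} (hab : a ≤ b)
    (h : ∀ t ∈ Set.Icc a b, HasDerivAt f (f' t) t) (h0 : ∀ t ∈ Set.Icc a b, 0 ≤ f' t) :
    f a ≤ f b := by
  have : MonotoneOn f (Set.Icc a b) := by
    refine monotoneOn_of_hasDerivWithinAt_nonneg (convex_Icc a b)
      (fun t ht => (h t ht).continuousAt.continuousWithinAt)
      (fun t ht => (h t (interior_subset ht)).hasDerivWithinAt)
      (fun t ht => h0 t (interior_subset ht))
  exact this (Set.left_mem_Icc.2 hab) (Set.right_mem_Icc.2 hab) hab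

lemma k_hasDerivAt {y : ℝ} (h : y ∈ Set.Ioo (0:ℝ) 1) :
    HasDerivAt (fun y => I y * Q y) (1 - Q y ^ 2) y := by
  refine ((I_hasDerivAt h).mul (Q_hasDerivAt h)).congr_deriv ?_
  have := (I_pos y).ne'
  field_simp; ring

lemma Isq_hasDerivAt {y : ℝ} (h : y ∈ Set.Ioo (0:ℝ) 1) :
    HasDerivAt (fun y => I y ^ 2) (-2 * (I y * Q y)) y := by
  refine ((I_hasDerivAt h).pow 2).congr_deriv ?_
  simp; ring

lemma comp_add {f : ℝ → ℝ} {f' c x : ℝ} (h : HasDerivAt f f' (c + x)) :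
    HasDerivAt (fun x => f (c + x)) f' x := by
  exact (h.comp x ((hasDerivAt_id x).const_add c)).congr_deriv (by simp)

lemma comp_sub {f : ℝ → ℝ} {f' c x : ℝ} (h : HasDerivAt f f' (c - x)) :
    HasDerivAt (fun x => f (c - x)) (-f') x := by
  exact (h.comp x ((hasDerivAt_id x).const_sub c)).congr_deriv (by simp)

lemma Qsq_hasDerivAt {y : ℝ} (h : y ∈ Set.Ioo (0:ℝ) 1) :
    HasDerivAt (fun y => Q y ^ 2) (2 * (Q y * (I y)⁻¹)) y := by
  refine ((Q_hasDerivAt h).pow 2).congr_deriv ?_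
  simp; ring

lemma QI_hasDerivAt {y : ℝ} (h : y ∈ Set.Ioo (0:ℝ) 1) :
    HasDerivAt (fun y => Q y * (I y)⁻¹) ((1 + Q y ^ 2) / I y ^ 2) y := by
  refine ((Q_hasDerivAt h).mul ((I_hasDerivAt h).inv (I_pos y).ne')).congr_deriv ?_
  have := (I_pos y).ne'
  simp only [Pi.inv_apply]
  field_simp

lemma mem_aux {c x t : ℝ} (h1 : c - x ∈ Set.Ioo (0:ℝ) 1) (h2 : c + x ∈ Set.Ioo (0:ℝ) 1)
    (ht : t ∈ Set.Icc 0 x) : c - t ∈ Set.Ioo (0:ℝ) 1 ∧ c + t ∈ Set.Ioo (0:ℝ) 1 ∧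
      c ∈ Set.Ioo (0:ℝ) 1 := by
  simp only [Set.mem_Ioo, Set.mem_Icc] at *
  refine ⟨⟨?_, ?_⟩, ⟨?_, ?_⟩, ?_, ?_⟩ <;> linarith

lemma Qsq_convex {c x : ℝ} (hx : 0 ≤ x) (h1 : c - x ∈ Set.Ioo (0:ℝ) 1)
    (h2 : c + x ∈ Set.Ioo (0:ℝ) 1) : 2 * Q c ^ 2 ≤ Q (c - x) ^ 2 + Q (c + x) ^ 2 := by
  have := mono_aux (f := fun t => Q (c - t) ^ 2 + Q (c + t) ^ 2)
    (f' := fun t => -(2 * (Q (c - t) * (I (c - t))⁻¹)) + 2 * (Q (c + t) * (I (c + t))⁻¹)) hx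
    (fun t ht => by
      obtain ⟨h3, h4, h5⟩ := mem_aux h1 h2 ht
      exact (comp_sub (Qsq_hasDerivAt h3)).add (comp_add (Qsq_hasDerivAt h4)))
    (fun t ht => by
      obtain ⟨h3, h4, h5⟩ := mem_aux h1 h2 ht
      have := mono_aux (f := fun y => Q y * (I y)⁻¹) (a := c - t) (b := c + t)
        (by linarith [ht.1]) (fun y hy => QI_hasDerivAt
          ⟨h3.1.trans_le hy.1, hy.2.trans_lt h4.2⟩) (fun y hy => by positivity)
      beta_reduce at this
      linarith)
  simp only [sub_zero, add_zero] at this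
  linarith

lemma tp1 {c x : ℝ} (hx : 0 ≤ x) (h1 : c - x ∈ Set.Ioo (0:ℝ) 1)
    (h2 : c + x ∈ Set.Ioo (0:ℝ) 1) :
    2 * I c ^ 2 + 2 * Q c ^ 2 * x ^ 2 ≤ I (c - x) ^ 2 + I (c + x) ^ 2 + 2 * x ^ 2 := by
  have key := mono_aux
    (f := fun t => I (c - t) ^ 2 + I (c + t) ^ 2 + (2 - 2 * Q c ^ 2) * t ^ 2)
    (f' := fun t => -(-2 * (I (c - t) * Q (c - t))) + (-2 * (I (c + t) * Q (c + t)))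
      + (2 - 2 * Q c ^ 2) * (2 * t)) hx
    (fun t ht => by
      obtain ⟨h3, h4, h5⟩ := mem_aux h1 h2 ht
      refine ((comp_sub (Isq_hasDerivAt h3)).add (comp_add (Isq_hasDerivAt h4))).add ?_
      simpa using (hasDerivAt_pow 2 t).const_mul (2 - 2 * Q c ^ 2))
    (fun t ht => by
      have := mono_aux
        (f := fun t => -(-2 * (I (c - t) * Q (c - t))) + (-2 * (I (c + t) * Q (c + t)))
          + (2 - 2 * Q c ^ 2) * (2 * t))
        (f' := fun t => (-(-2 * -(1 - Q (c - t) ^ 2))) + (-2 * (1 - Q (c + t) ^ 2))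
          + (2 - 2 * Q c ^ 2) * (2 * 1)) ht.1
        (fun s hs => by
          obtain ⟨h3, h4, h5⟩ := mem_aux h1 h2 ⟨hs.1, hs.2.trans ht.2⟩
          refine ((((comp_sub (k_hasDerivAt h3)).const_mul _).neg).add
            ((comp_add (k_hasDerivAt h4)).const_mul _)).add ?_
          exact ((hasDerivAt_id s).const_mul 2).const_mul _)
        (fun s hs => by
          obtain ⟨h3, h4, h5⟩ := mem_aux h1 h2 ⟨hs.1, hs.2.trans ht.2⟩
          have := Qsq_convex hs.1 h3 h4
          linarith)
      simp only [sub_zero, add_zero] at this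
      linarith)
  simp only [sub_zero, add_zero] at key
  linarith

lemma tp2a {c x : ℝ} (hx : 0 ≤ x) (h1 : c - x ∈ Set.Ioo (0:ℝ) 1)
    (h2 : c + x ∈ Set.Ioo (0:ℝ) 1) (hc : c ≤ 1 / 2) :
    |Q (c + x)| ≤ |Q (c - x)| := by
  have e1 : Q (c - x) ≤ Q (c + x) := Q_le h1 h2 (by linarith)
  have e2 : Q (c + x) ≤ - Q (c - x) := by
    rw [← Q_symm h1]
    refine Q_le h2 ?_ (by linarith)
    simp only [Set.mem_Ioo] at *
    constructor <;> linarith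
  rw [abs_of_nonpos (show Q (c - x) ≤ 0 by linarith)]
  rw [abs_le]
  constructor <;> linarith

lemma tp2b {c x : ℝ} (hx : 0 ≤ x) (h1 : c - x ∈ Set.Ioo (0:ℝ) 1)
    (h2 : c + x ∈ Set.Ioo (0:ℝ) 1) (hc : c ≤ 1 / 2) :
    (I (c + x) ^ 2 - I (c - x) ^ 2) ^ 2 ≤ 16 * I c ^ 2 * Q c ^ 2 * x ^ 2 := by
  have key := mono_aux
    (f := fun t => - I (c + t) ^ 2 + I (c - t) ^ 2 + (-4 * (I c * Q c)) * t)
    (f' := fun t => -(-2 * (I (c + t) * Q (c + t))) + -(-2 * (I (c - t) * Q (c - t)))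
      + (-4 * (I c * Q c)) * 1) hx
    (fun t ht => by
      obtain ⟨h3, h4, h5⟩ := mem_aux h1 h2 ht
      refine (((comp_add (Isq_hasDerivAt h4)).neg).add (comp_sub (Isq_hasDerivAt h3))).add ?_
      exact (hasDerivAt_id t).const_mul _)
    (fun t ht => by
      have := mono_aux
        (f := fun t => I (c + t) * Q (c + t) + I (c - t) * Q (c - t))
        (f' := fun t => (1 - Q (c + t) ^ 2) + -(1 - Q (c - t) ^ 2)) ht.1
        (fun s hs => by
          obtain ⟨h3, h4, h5⟩ := mem_aux h1 h2 ⟨hs.1, hs.2.trans ht.2⟩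
          exact (comp_add (k_hasDerivAt h4)).add (comp_sub (k_hasDerivAt h3)))
        (fun s hs => by
          obtain ⟨h3, h4, h5⟩ := mem_aux h1 h2 ⟨hs.1, hs.2.trans ht.2⟩
          have := sq_le_sq.2 (tp2a hs.1 h3 h4 hc)
          linarith)
      simp only [sub_zero, add_zero] at this
      linarith)
  simp only [sub_zero, add_zero] at key
  have e1 : I (c - x) ≤ I (c + x) := ph_le _ _ (tp2a hx h1 h2 hc)
  have e2 : I (c - x) ^ 2 ≤ I (c + x) ^ 2 := by
    have := (I_pos (c - x)).le
    gcongr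
  calc (I (c + x) ^ 2 - I (c - x) ^ 2) ^ 2 ≤ (-4 * (I c * Q c) * x) ^ 2 := by
        apply pow_le_pow_left₀ <;> linarith
    _ = _ := by ring

lemma tp2 {c x : ℝ} (hx : 0 ≤ x) (h1 : c - x ∈ Set.Ioo (0:ℝ) 1)
    (h2 : c + x ∈ Set.Ioo (0:ℝ) 1) :
    (I (c + x) ^ 2 - I (c - x) ^ 2) ^ 2 ≤ 16 * I c ^ 2 * Q c ^ 2 * x ^ 2 := by
  obtain hc | hc := le_total c (1 / 2)
  · exact tp2b hx h1 h2 hc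
  · have h5 : c ∈ Set.Ioo (0:ℝ) 1 := (mem_aux h1 h2 (Set.right_mem_Icc.2 hx)).2.2
    have := tp2b (c := 1 - c) hx (by
      simp only [Set.mem_Ioo] at *
      constructor <;> linarith) (by
      simp only [Set.mem_Ioo] at *
      constructor <;> linarith) (by linarith)
    rw [I_symm h5, Q_symm h5, show 1 - c + x = 1 - (c - x) by ring,
      show 1 - c - x = 1 - (c + x) by ring, I_symm h1, I_symm h2] at this
    linarith

lemma alg_aux {J P S : ℝ} (hJ : 0 < J) (hP : 0 ≤ P) (hS : 0 ≤ S)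
    (h : (P ^ 2 - S ^ 2) ^ 2 ≤ 8 * J ^ 2 * (P ^ 2 + S ^ 2 - 2 * J ^ 2)) : 2 * J ≤ P + S := by
  by_contra! hlt
  have h1 : 0 ≤ (4 * J ^ 2 - (P + S) ^ 2) * ((P - S) ^ 2 - 4 * J ^ 2) := by nlinarith
  have h2 : 0 < 4 * J ^ 2 - (P + S) ^ 2 := by nlinarith
  have h3 := nonneg_of_mul_nonneg_right h1 h2
  nlinarith [mul_nonneg hP hS]

lemma two_point_aux {c x : ℝ} (hx : 0 ≤ x) (h1 : c - x ∈ Set.Ioo (0:ℝ) 1)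
    (h2 : c + x ∈ Set.Ioo (0:ℝ) 1) :
    2 * I c ≤ √(I (c + x) ^ 2 + x ^ 2) + √(I (c - x) ^ 2 + x ^ 2) := by
  refine alg_aux (I_pos c) (by positivity) (by positivity) ?_
  rw [Real.sq_sqrt (by positivity), Real.sq_sqrt (by positivity)]
  have e1 := tp1 hx h1 h2
  have e2 := tp2 hx h1 h2
  have : 0 ≤ 8 * I c ^ 2 := by positivity
  nlinarith

lemma two_point {a b : ℝ} (ha : a ∈ Set.Ioo (0:ℝ) 1) (hb : b ∈ Set.Ioo (0:ℝ) 1) :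
    I ((a + b) / 2) ≤ (√(I a ^ 2 + ((a - b) / 2) ^ 2) + √(I b ^ 2 + ((a - b) / 2) ^ 2)) / 2 := by
  obtain h | h := le_total b a
  · have := two_point_aux (c := (a + b) / 2) (x := (a - b) / 2) (by linarith)
      (by convert hb using 1; ring) (by convert ha using 1; ring)
    rw [show (a + b) / 2 + (a - b) / 2 = a by ring,
      show (a + b) / 2 - (a - b) / 2 = b by ring] at this
    linarith
  · have := two_point_aux (c := (a + b) / 2) (x := (b - a) / 2) (by linarith)
      (by convert ha using 1; ring) (by convert hb using 1; ring)
    rw [show (a + b) / 2 + (b - a) / 2 = b by ring,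
      show (a + b) / 2 - (b - a) / 2 = a by ring,
      show ((b - a) / 2) ^ 2 = ((a - b) / 2) ^ 2 by ring] at this
    linarith

end CubeIso

open Filter Topology ProbabilityTheory

namespace CubeIso

section avg
variable {E : Type*} [AddCommGroup E]

noncomputable def avg : List E → (E → ℝ) → ℝ
  | [], f => f 0
  | v :: L, f => (avg L (fun x => f (x + v)) + avg L (fun x => f (x - v))) / 2

lemma avg_mono (L : List E) : ∀ {f g : E → ℝ}, (∀ x, f x ≤ g x) → avg L f ≤ avg L g := by
  induction L with
  | nil => intro f g h; exact h 0
  | cons v L ih =>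
    intro f g h
    have h1 := ih (f := fun x => f (x + v)) (g := fun x => g (x + v)) (fun x => h _)
    have h2 := ih (f := fun x => f (x - v)) (g := fun x => g (x - v)) (fun x => h _)
    simp only [avg]; linarith

lemma avg_sub (L : List E) : ∀ (f g : E → ℝ), avg L (fun x => f x - g x) = avg L f - avg L g := by
  induction L with
  | nil => intro f g; rfl
  | cons v L ih =>
    intro f g
    simp only [avg]
    rw [ih (fun x => f (x + v)), ih (fun x => f (x - v))]; ring

lemma avg_const (L : List E) (c : ℝ) : avg L (fun _ => c) = c := by
  induction L with
  | nil => rfl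
  | cons v L ih => simp only [avg]; rw [ih]; ring

lemma avg_add_const (L : List E) (f : E → ℝ) (c : ℝ) :
    avg L (fun x => f x + c) = avg L f + c := by
  have := avg_sub L f (fun _ => -c)
  simp only [sub_neg_eq_add, avg_const] at this
  exact this

lemma avg_div2 (L : List E) : ∀ (f : E → ℝ), avg L (fun x => f x / 2) = avg L f / 2 := by
  induction L with
  | nil => intro f; rfl
  | cons v L ih =>
    intro f
    simp only [avg]
    rw [ih (fun x => f (x + v)), ih (fun x => f (x - v))]; ring

lemma avg_mem (L : List E) : ∀ {f : E → ℝ}, (∀ x, f x ∈ Set.Ioo (0:ℝ) 1) →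
    avg L f ∈ Set.Ioo (0:ℝ) 1 := by
  induction L with
  | nil => intro f h; exact h 0
  | cons v L ih =>
    intro f h
    have h1 := ih (f := fun x => f (x + v)) (fun x => h _)
    have h2 := ih (f := fun x => f (x - v)) (fun x => h _)
    simp only [avg, Set.mem_Ioo] at *
    constructor <;> linarith

lemma sqrt_tri (a b c d : ℝ) :
    √(((a + c) / 2) ^ 2 + ((b + d) / 2) ^ 2) ≤ (√(a ^ 2 + b ^ 2) + √(c ^ 2 + d ^ 2)) / 2 := by
  apply Real.sqrt_le_iff.2
  constructor
  · positivity
  have h1 := Real.sq_sqrt (show 0 ≤ a ^ 2 + b ^ 2 by positivity)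
  have h2 := Real.sq_sqrt (show 0 ≤ c ^ 2 + d ^ 2 by positivity)
  have h3 : a * c + b * d ≤ √(a ^ 2 + b ^ 2) * √(c ^ 2 + d ^ 2) := by
    rw [← Real.sqrt_mul (by positivity)]
    apply Real.le_sqrt_of_sq_le
    nlinarith [sq_nonneg (a * d - b * c)]
  nlinarith

lemma avg_sqrt (L : List E) : ∀ (f g : E → ℝ),
    √(avg L f ^ 2 + avg L g ^ 2) ≤ avg L (fun x => √(f x ^ 2 + g x ^ 2)) := by
  induction L with
  | nil => intro f g; exact le_rfl
  | cons v L ih =>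
    intro f g
    simp only [avg]
    have h1 := ih (fun x => f (x + v)) (fun x => g (x + v))
    have h2 := ih (fun x => f (x - v)) (fun x => g (x - v))
    refine (sqrt_tri _ _ _ _).trans ?_
    linarith

lemma sqrt_step (L : List E) (F W g D : E → ℝ) (m : ℝ) (hm : 0 ≤ m)
    (hW : ∀ x, 0 ≤ W x)
    (h : m ≤ avg L (fun x => √(F x ^ 2 + W x))) (hg : ∀ x, |g x| ≤ D x) :
    √(m ^ 2 + (avg L g) ^ 2) ≤ avg L (fun x => √(F x ^ 2 + (D x ^ 2 + W x))) := by
  calc √(m ^ 2 + (avg L g) ^ 2)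
      ≤ √((avg L (fun x => √(F x ^ 2 + W x))) ^ 2 + (avg L g) ^ 2) := by gcongr
    _ ≤ avg L (fun x => √((√(F x ^ 2 + W x)) ^ 2 + (g x) ^ 2)) := avg_sqrt _ _ _
    _ ≤ _ := by
      refine avg_mono _ fun x => ?_
      have h1 := hW x
      rw [Real.sq_sqrt (by positivity)]
      apply Real.sqrt_le_sqrt
      have := sq_le_sq' (by linarith [neg_abs_le (g x), hg x]) ((le_abs_self _).trans (hg x))
      linarith

lemma bobkov_discrete (L : List E) : ∀ (f : E → ℝ) (D : E → E → ℝ)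
    (_ : ∀ x, f x ∈ Set.Ioo (0:ℝ) 1)
    (_ : ∀ v ∈ L, ∀ x, |f (x + (v + v)) - f x| ≤ 2 * D v x)
    (_ : ∀ v ∈ L, ∀ x, |f (x - (v + v)) - f x| ≤ 2 * D v x),
    I (avg L f) ≤ avg L (fun x => √(I (f x) ^ 2 + (L.map (fun v => D v x ^ 2)).sum)) := by
  induction L with
  | nil =>
    intro f D hf _ _
    simp only [avg, List.map_nil, List.sum_nil, add_zero]
    rw [Real.sqrt_sq (I_pos _).le]
  | cons v L ih =>
    intro f D hf hp hm
    have i1 := ih (fun x => f (x + v)) (fun w x => D w (x + v)) (fun x => hf _)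
      (fun w hw x => by
        have := hp w (List.mem_cons_of_mem _ hw) (x + v)
        rwa [show x + v + (w + w) = x + (w + w) + v by abel] at this)
      (fun w hw x => by
        have := hm w (List.mem_cons_of_mem _ hw) (x + v)
        rwa [show x + v - (w + w) = x - (w + w) + v by abel] at this)
    have i2 := ih (fun x => f (x - v)) (fun w x => D w (x - v)) (fun x => hf _)
      (fun w hw x => by
        have := hp w (List.mem_cons_of_mem _ hw) (x - v)
        rwa [show x - v + (w + w) = x + (w + w) - v by abel] at this)
      (fun w hw x => by
        have := hm w (List.mem_cons_of_mem _ hw) (x - v)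
        rwa [show x - v - (w + w) = x - (w + w) - v by abel] at this)
    have hs : ∀ y, 0 ≤ (L.map (fun v => D v y ^ 2)).sum := fun y => by
      apply List.sum_nonneg
      intro z hz
      obtain ⟨w, _, rfl⟩ := List.mem_map.1 hz
      positivity
    have tp := two_point (avg_mem L (f := fun x => f (x + v)) (fun x => hf _))
      (avg_mem L (f := fun x => f (x - v)) (fun x => hf _))
    rw [← avg_sub, ← avg_div2] at tp
    have s1 := sqrt_step L (fun x => I (f (x + v)))
      (fun x => (L.map (fun w => D w (x + v) ^ 2)).sum)
      (fun x => (f (x + v) - f (x - v)) / 2) (fun x => D v (x + v)) _ (I_pos _).le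
      (fun x => hs _) i1 (fun x => by
        have := hm v List.mem_cons_self (x + v)
        rw [show x + v - (v + v) = x - v by abel, abs_sub_comm] at this
        rw [abs_div, abs_two]; linarith)
    have s2 := sqrt_step L (fun x => I (f (x - v)))
      (fun x => (L.map (fun w => D w (x - v) ^ 2)).sum)
      (fun x => (f (x + v) - f (x - v)) / 2) (fun x => D v (x - v)) _ (I_pos _).le
      (fun x => hs _) i2 (fun x => by
        have := hp v List.mem_cons_self (x - v)
        rw [show x - v + (v + v) = x + v by abel] at this
        rw [abs_div, abs_two]; linarith)
    simp only [avg, List.map_cons, List.sum_cons]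
    linarith

end avg

section meas
variable {E : Type*} [NormedAddCommGroup E] [InnerProductSpace ℝ E] [FiniteDimensional ℝ E]
  [MeasurableSpace E] [BorelSpace E]

noncomputable def mu : List E → Measure E
  | [] => Measure.dirac 0
  | v :: L => (2⁻¹ : ENNReal) • ((mu L).map (fun x => x + v)) +
      (2⁻¹ : ENNReal) • ((mu L).map (fun x => x - v))

instance mu_prob (L : List E) : IsProbabilityMeasure (mu L) := by
  induction L with
  | nil => unfold mu; infer_instance
  | cons v L ih =>
    unfold mu
    constructor
    rw [Measure.add_apply, Measure.smul_apply, Measure.smul_apply,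
      Measure.map_apply (by fun_prop) .univ, Measure.map_apply (by fun_prop) .univ]
    simp [ENNReal.inv_two_add_inv_two]

lemma mu_integral_cons {F : Type*} [NormedAddCommGroup F] [NormedSpace ℝ F] [CompleteSpace F]
    (v : E) (L : List E) {f : E → F} (hf : Continuous f) {C : ℝ} (hC : ∀ x, ‖f x‖ ≤ C) :
    ∫ x, f x ∂(mu (v :: L)) = (2⁻¹ : ℝ) • (∫ x, f (x + v) ∂(mu L)) +
      (2⁻¹ : ℝ) • (∫ x, f (x - v) ∂(mu L)) := by
  have hi : ∀ ν : Measure E, IsFiniteMeasure ν → Integrable f ν := fun ν hν =>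
    Integrable.of_bound hf.aestronglyMeasurable C (ae_of_all _ hC)
  have m1 : Measurable (fun x : E => x + v) := by fun_prop
  have m2 : Measurable (fun x : E => x - v) := by fun_prop
  have p1 := Measure.isProbabilityMeasure_map (μ := mu L) m1.aemeasurable
  have p2 := Measure.isProbabilityMeasure_map (μ := mu L) m2.aemeasurable
  rw [mu, integral_add_measure ((hi _ inferInstance).smul_measure (by simp))
    ((hi _ inferInstance).smul_measure (by simp)),
    integral_smul_measure, integral_smul_measure,
    integral_map m1.aemeasurable hf.aestronglyMeasurable,
    integral_map m2.aemeasurable hf.aestronglyMeasurable]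
  simp

lemma avg_eq (L : List E) : ∀ {f : E → ℝ} (_ : Continuous f) {C : ℝ} (_ : ∀ x, ‖f x‖ ≤ C),
    avg L f = ∫ x, f x ∂(mu L) := by
  induction L with
  | nil => intro f hf C hC; simp [avg, mu]
  | cons v L ih =>
    intro f hf C hC
    rw [mu_integral_cons v L hf hC, ← ih (by fun_prop) (fun x => hC _),
      ← ih (by fun_prop) (fun x => hC _), avg]
    simp only [smul_eq_mul]; ring

lemma mu_charFun (L : List E) (t : E) :
    charFun (mu L) t = ((L.map (fun v => Real.cos (inner ℝ v t))).prod : ℝ) := by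
  induction L with
  | nil => simp [mu, charFun_dirac]
  | cons v L ih =>
    rw [charFun_apply,
      mu_integral_cons (f := fun x => Complex.exp (((inner ℝ x t : ℝ) : ℂ) * Complex.I)) v L (C := 1)]
    · simp_rw [inner_add_left, inner_sub_left]
      push_cast
      simp_rw [add_mul, sub_mul, Complex.exp_add, Complex.exp_sub]
      rw [integral_mul_const, integral_div, ← charFun_apply, ih]
      simp only [List.map_cons, List.prod_cons]
      push_cast
      rw [Complex.cos, neg_mul, Complex.exp_neg]
      simp only [Complex.real_smul]
      push_cast
      ring
    · fun_prop
    · intro x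
      rw [Complex.norm_exp_ofReal_mul_I]

end meas
end CubeIso

open Filter Topology ProbabilityTheory

namespace CubeIso

lemma cos_pow_tendsto (t : ℝ) :
    Tendsto (fun N : ℕ => (((Real.cos ((√N)⁻¹ * t)) ^ N : ℝ) : ℂ)) atTop
      (𝓝 (Complex.exp (- t ^ 2 / 2))) := by
  have h := tendsto_charFun_inv_sqrt_mul_pow (P := mu [(1:ℝ)]) (X := fun x => x) (by fun_prop)
    (by
      simp only [mu]
      rw [integral_add_measure, integral_smul_measure, integral_smul_measure]
      · simp
      all_goals simp [Measure.map_dirac, integrable_dirac, Integrable.smul_measure]) (by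
      simp only [mu]
      rw [integral_add_measure, integral_smul_measure, integral_smul_measure]
      · simp; norm_num
      all_goals simp [Measure.map_dirac, integrable_dirac, Integrable.smul_measure]) t
  refine h.congr fun N => ?_
  rw [Measure.map_id', mu_charFun]
  simp

abbrev EE (n : ℕ) := EuclideanSpace ℝ (Fin n)

noncomputable def steps (n N : ℕ) : List (EE n) :=
  (List.finRange n).flatMap fun i =>
    List.replicate N (EuclideanSpace.single i ((√N)⁻¹ : ℝ))

lemma steps_prod (n N : ℕ) (g : EE n → ℝ) :
    ((steps n N).map g).prod = ∏ i, (g (EuclideanSpace.single i ((√N)⁻¹ : ℝ))) ^ N := by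
  have h : ∀ l : List (Fin n), ((l.flatMap fun i =>
      List.replicate N (EuclideanSpace.single i ((√N)⁻¹ : ℝ))).map g).prod =
      (l.map fun i => (g (EuclideanSpace.single i ((√N)⁻¹ : ℝ))) ^ N).prod := by
    intro l
    induction l with
    | nil => simp
    | cons i l ih => simp [List.flatMap_cons, ih]
  rw [steps, h, ← List.prod_ofFn, List.ofFn_eq_map]

lemma steps_sum (n N : ℕ) (g : EE n → ℝ) :
    ((steps n N).map g).sum = ∑ i, N * (g (EuclideanSpace.single i ((√N)⁻¹ : ℝ))) := by
  have h : ∀ l : List (Fin n), ((l.flatMap fun i =>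
      List.replicate N (EuclideanSpace.single i ((√N)⁻¹ : ℝ))).map g).sum =
      (l.map fun i => N * (g (EuclideanSpace.single i ((√N)⁻¹ : ℝ)))).sum := by
    intro l
    induction l with
    | nil => simp
    | cons i l ih => simp [List.flatMap_cons, ih]
  rw [steps, h, ← List.sum_ofFn, List.ofFn_eq_map]

lemma steps_mem {n N : ℕ} {v : EE n} (h : v ∈ steps n N) :
    ∃ i, v = EuclideanSpace.single i ((√N)⁻¹ : ℝ) := by
  simp only [steps, List.mem_flatMap] at h
  obtain ⟨i, _, h⟩ := h
  exact ⟨i, List.eq_of_mem_replicate h⟩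

lemma steps_charFun (n : ℕ) (t : EE n) :
    Tendsto (fun N => charFun (mu (steps n N)) t) atTop (𝓝 (charFun (stdGaussian (EE n)) t)) := by
  simp_rw [mu_charFun, steps_prod, charFun_stdGaussian]
  have h : Tendsto (fun N : ℕ => ∏ i : Fin n, (((Real.cos ((√N)⁻¹ * t i)) ^ N : ℝ) : ℂ)) atTop
      (𝓝 (∏ i : Fin n, Complex.exp (- (t i) ^ 2 / 2))) :=
    tendsto_finsetProd _ fun i _ => cos_pow_tendsto (t i)
  convert h using 2
  · push_cast
    refine Finset.prod_congr rfl fun i _ => ?_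
    simp [EuclideanSpace.inner_single_left]
  · rw [← Complex.exp_sum]
    congr 1
    rw [← Complex.ofReal_pow, EuclideanSpace.real_norm_sq_eq]
    push_cast
    rw [← Finset.sum_div, Finset.sum_neg_distrib]

lemma clt (n : ℕ) {f : EE n → ℝ} (hf : Continuous f) {C : ℝ} (hC : ∀ x, ‖f x‖ ≤ C) :
    Tendsto (fun N => avg (steps n N) f) atTop (𝓝 (∫ x, f x ∂(stdGaussian (EE n)))) := by
  let ν : ℕ → ProbabilityMeasure (EE n) := fun N => ⟨mu (steps n N), inferInstance⟩
  let ν0 : ProbabilityMeasure (EE n) := ⟨stdGaussian (EE n), inferInstance⟩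
  have h : Tendsto ν atTop (𝓝 ν0) :=
    ProbabilityMeasure.tendsto_iff_tendsto_charFun.2 fun t => steps_charFun n t
  have := ProbabilityMeasure.tendsto_iff_forall_integral_tendsto.1 h
    (BoundedContinuousFunction.ofNormedAddCommGroup f hf C hC)
  refine this.congr fun N => ?_
  rw [avg_eq _ hf hC]
  rfl

end CubeIso

open Filter Topology ProbabilityTheory

namespace CubeIso

lemma I_contAt {y : ℝ} (h : y ∈ Set.Ioo (0:ℝ) 1) : ContinuousAt I y :=
  (I_hasDerivAt h).continuousAt

lemma I_comp_cont {X : Type*} [TopologicalSpace X] {f : X → ℝ} (hf : Continuous f)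
    (h : ∀ x, f x ∈ Set.Ioo (0:ℝ) 1) : Continuous (fun x => I (f x)) :=
  continuous_iff_continuousAt.2 fun x =>
    ContinuousAt.comp (g := I) (I_contAt (h x)) hf.continuousAt

lemma integral_mem {X : Type*} [MeasurableSpace X] {μ : Measure X} [IsProbabilityMeasure μ]
    {f : X → ℝ} (hf : AEStronglyMeasurable f μ)
    (h : ∀ x, f x ∈ Set.Ioo (0:ℝ) 1) : ∫ x, f x ∂μ ∈ Set.Ioo (0:ℝ) 1 := by
  have hi : Integrable f μ := Integrable.of_bound hf 1 (ae_of_all _ fun x => by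
    rw [Real.norm_eq_abs, abs_of_pos (h x).1]; exact (h x).2.le)
  have key : ∀ g : X → ℝ, Integrable g μ → (∀ x, 0 < g x) → 0 < ∫ x, g x ∂μ := by
    intro g hg h0
    rw [integral_pos_iff_support_of_nonneg (fun x => (h0 x).le) hg]
    have : Function.support g = Set.univ := by
      ext x; simp [(h0 x).ne']
    rw [this]; simp
  refine ⟨key f hi fun x => (h x).1, ?_⟩
  have := key (fun x => 1 - f x) ((integrable_const 1).sub hi) (fun x => by linarith [(h x).2])
  rw [integral_sub (integrable_const 1) hi] at this
  simp at this
  linarith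

lemma sum_sq_le {n : ℕ} (φ : EE n →L[ℝ] ℝ) :
    ∑ i, (φ (EuclideanSpace.single i 1)) ^ 2 ≤ ‖φ‖ ^ 2 := by
  set g := (InnerProductSpace.toDual ℝ (EE n)).symm φ with hg
  have h1 : ‖φ‖ = ‖g‖ := by simp [hg]
  have h2 : ∀ i, φ (EuclideanSpace.single i 1) = g i := by
    intro i
    have : φ (EuclideanSpace.single i 1) = inner ℝ g (EuclideanSpace.single i 1) := by
      rw [hg, InnerProductSpace.toDual_symm_apply]
    rw [this, EuclideanSpace.inner_single_right]; simp
  rw [h1, EuclideanSpace.real_norm_sq_eq]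
  simp_rw [h2]
  exact le_rfl

lemma bobkov_gauss {n : ℕ} {f : EE n → ℝ} (hf : ContDiff ℝ 1 f)
    (h01 : ∀ x, f x ∈ Set.Ioo (0:ℝ) 1) (hU : UniformContinuous (fderiv ℝ f)) {M : ℝ}
    (hM : ∀ x, ‖fderiv ℝ f x‖ ≤ M) :
    I (∫ x, f x ∂(stdGaussian (EE n))) ≤
      ∫ x, √(I (f x) ^ 2 + ‖fderiv ℝ f x‖ ^ 2) ∂(stdGaussian (EE n)) := by
  have hM0 : 0 ≤ M := (norm_nonneg _).trans (hM 0)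
  have hdc : Continuous (fderiv ℝ f) := hU.continuous
  have hGc : Continuous (fun x => √(I (f x) ^ 2 + ‖fderiv ℝ f x‖ ^ 2)) :=
    (((I_comp_cont hf.continuous h01).pow 2).add (hdc.norm.pow 2)).sqrt
  have hGb : ∀ x, ‖√(I (f x) ^ 2 + ‖fderiv ℝ f x‖ ^ 2)‖ ≤ √(ph 0 ^ 2 + M ^ 2) := by
    intro x
    rw [Real.norm_eq_abs, abs_of_nonneg (Real.sqrt_nonneg _)]
    apply Real.sqrt_le_sqrt
    have h1 : I (f x) ≤ ph 0 := ph_le_zero _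
    have h2 := (I_pos (f x)).le
    have h3 := hM x
    gcongr
  have key : ∀ η : ℝ, 0 < η → I (∫ x, f x ∂(stdGaussian (EE n))) ≤
      ∫ x, √(I (f x) ^ 2 + ‖fderiv ℝ f x‖ ^ 2) ∂(stdGaussian (EE n)) +
        √(n * (2 * M * η + η ^ 2)) := by
    intro η hη
    obtain ⟨δ, hδ, hδ'⟩ := Metric.uniformContinuous_iff.1 hU η hη
    have hlim1 := clt n hf.continuous (C := 1) (fun x => by
      rw [Real.norm_eq_abs, abs_of_pos (h01 x).1]; exact (h01 x).2.le)
    have hlim2 := clt n hGc hGb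
    have hmem := integral_mem (μ := stdGaussian (EE n)) hf.continuous.aestronglyMeasurable h01
    refine le_of_tendsto_of_tendsto ((I_contAt hmem).tendsto.comp hlim1)
      (hlim2.add_const (√(n * (2 * M * η + η ^ 2)))) ?_
    have hh : Tendsto (fun N : ℕ => 2 * (√(N : ℝ))⁻¹) atTop (𝓝 0) := by
      have : Tendsto (fun N : ℕ => (√(N : ℝ))⁻¹) atTop (𝓝 0) :=
        tendsto_inv_atTop_zero.comp <| Real.tendsto_sqrt_atTop.comp tendsto_natCast_atTop_atTop
      simpa using this.const_mul 2
    filter_upwards [hh.eventually (gt_mem_nhds hδ), eventually_ge_atTop 1] with N hN hN1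
    have hNpos : (0:ℝ) < N := by exact_mod_cast hN1
    -- increments
    have hinc : ∀ x w : EE n, ‖w‖ < δ → |f (x + w) - f x| ≤ |fderiv ℝ f x w| + η * ‖w‖ := by
      intro x w hw
      have := (convex_ball x δ).norm_image_sub_le_of_norm_fderiv_le' (𝕜 := ℝ) (f := f)
        (φ := fderiv ℝ f x) (C := η) (x := x) (y := x + w)
        (fun y _ => (hf.differentiable one_ne_zero) y)
        (fun y hy => by
          have := hδ' (a := y) (b := x) hy
          rw [dist_eq_norm] at this
          exact this.le) (Metric.mem_ball_self hδ) (by simpa [Metric.mem_ball, dist_eq_norm] using hw)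
      rw [add_sub_cancel_left, Real.norm_eq_abs] at this
      have h2 := abs_sub_abs_le_abs_sub (f (x + w) - f x) (fderiv ℝ f x w)
      linarith
    have hnorm : ∀ v ∈ steps n N, ‖v‖ = (√(N : ℝ))⁻¹ := by
      intro v hv
      obtain ⟨i, rfl⟩ := steps_mem hv
      rw [PiLp.norm_single, Real.norm_eq_abs, abs_of_nonneg (by positivity)]
    have hvv : ∀ v ∈ steps n N, ‖v + v‖ = 2 * ‖v‖ := by
      intro v hv
      rw [← two_smul ℝ v, norm_smul]; simp
    have hb := bobkov_discrete (steps n N) f (fun v x => |fderiv ℝ f x v| + η * ‖v‖) h01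
      (fun v hv x => by
        have := hinc x (v + v) (by rw [hvv v hv, hnorm v hv]; exact hN)
        rw [hvv v hv, map_add, ← two_mul, abs_mul, abs_two] at this
        linarith)
      (fun v hv x => by
        have := hinc x (-(v + v)) (by rw [norm_neg, hvv v hv, hnorm v hv]; exact hN)
        rw [norm_neg, hvv v hv, map_neg, abs_neg, map_add, ← two_mul, abs_mul, abs_two,
          ← sub_eq_add_neg] at this
        linarith)
    refine hb.trans ?_
    rw [← avg_add_const]
    refine avg_mono _ fun x => ?_
    rw [steps_sum]
    have hsum : ∑ i, (N:ℝ) * (|fderiv ℝ f x (EuclideanSpace.single i (√(N:ℝ))⁻¹)| +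
        η * ‖(EuclideanSpace.single i (√(N:ℝ))⁻¹ : EE n)‖) ^ 2 ≤
        ‖fderiv ℝ f x‖ ^ 2 + n * (2 * M * η + η ^ 2) := by
      have h1 : ∀ i : Fin n, (N:ℝ) * (|fderiv ℝ f x (EuclideanSpace.single i (√(N:ℝ))⁻¹)| +
        η * ‖(EuclideanSpace.single i (√(N:ℝ))⁻¹ : EE n)‖) ^ 2 ≤
          (fderiv ℝ f x (EuclideanSpace.single i 1)) ^ 2 + (2 * M * η + η ^ 2) := by
        intro i
        have e1 : (EuclideanSpace.single i (√(N:ℝ))⁻¹ : EE n) =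
            (√(N:ℝ))⁻¹ • EuclideanSpace.single i 1 := by
          ext j; by_cases hij : j = i <;> simp [hij]
        have e2 : |fderiv ℝ f x (EuclideanSpace.single i 1)| ≤ M := by
          have := (fderiv ℝ f x).le_opNorm (EuclideanSpace.single i (1:ℝ))
          rw [PiLp.norm_single, Real.norm_eq_abs] at this
          simp at this
          exact this.trans (hM x)
        rw [PiLp.norm_single, e1, map_smul, smul_eq_mul, abs_mul, Real.norm_eq_abs,
          abs_of_nonneg (show (0:ℝ) ≤ (√(N:ℝ))⁻¹ by positivity), mul_comm η, ← mul_add, mul_pow,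
          inv_pow, Real.sq_sqrt hNpos.le, ← mul_assoc, mul_inv_cancel₀ hNpos.ne', one_mul,
          add_sq, sq_abs]
        nlinarith
      refine (Finset.sum_le_sum fun i _ => h1 i).trans ?_
      rw [Finset.sum_add_distrib]
      simp only [Finset.sum_const, Finset.card_univ, Fintype.card_fin, nsmul_eq_mul]
      linarith [sum_sq_le (fderiv ℝ f x)]
    calc _ ≤ √((I (f x) ^ 2 + ‖fderiv ℝ f x‖ ^ 2) + n * (2 * M * η + η ^ 2)) := by
          apply Real.sqrt_le_sqrt; linarith
      _ ≤ _ := by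
          have h1 := Real.sq_sqrt (show 0 ≤ I (f x) ^ 2 + ‖fderiv ℝ f x‖ ^ 2 by positivity)
          have h2 := Real.sq_sqrt (show 0 ≤ n * (2 * M * η + η ^ 2) by positivity)
          refine Real.sqrt_le_iff.2 ⟨by positivity, ?_⟩
          rw [add_sq, h1, h2]
          have : 0 ≤ 2 * √(I (f x) ^ 2 + ‖fderiv ℝ f x‖ ^ 2) * √(n * (2 * M * η + η ^ 2)) := by
            positivity
          linarith
  have hl : Tendsto (fun η : ℝ => ∫ x, √(I (f x) ^ 2 + ‖fderiv ℝ f x‖ ^ 2) ∂(stdGaussian (EE n)) +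
        √(n * (2 * M * η + η ^ 2))) (𝓝[>] 0)
        (𝓝 (∫ x, √(I (f x) ^ 2 + ‖fderiv ℝ f x‖ ^ 2) ∂(stdGaussian (EE n)) +
        √(n * (2 * M * 0 + 0 ^ 2)))) := by
    refine Tendsto.mono_left ?_ nhdsWithin_le_nhds
    exact Continuous.tendsto (by fun_prop) 0
  have := ge_of_tendsto hl (eventually_nhdsWithin_of_forall fun η hη => key η hη)
  simpa using this

end CubeIso

open Filter Topology ProbabilityTheory

namespace CubeIso

lemma ph_atTop : Tendsto ph atTop (𝓝 0) := by
  unfold ph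
  have h1 : Tendsto (fun t : ℝ => -t ^ 2 / 2) atTop atBot := by
    have : Tendsto (fun t : ℝ => t ^ 2 / 2) atTop atTop :=
      (tendsto_pow_atTop two_ne_zero).atTop_div_const (by norm_num)
    refine (tendsto_neg_atTop_atBot.comp this).congr fun t => ?_
    simp; ring
  simpa using (Real.tendsto_exp_atBot.comp h1).const_mul (√(2 * π))⁻¹

section soft
variable {n : ℕ} {d : EE n → ℝ} {k : ℝ}

noncomputable def gg (d : EE n → ℝ) (k s : ℝ) : ℝ :=
  ∫ x, stdNormalCDF (k * (s - d x)) ∂(stdGaussian (EE n))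

lemma gg_mem (hd : Continuous d) (s : ℝ) : gg d k s ∈ Set.Ioo (0:ℝ) 1 :=
  integral_mem (cdf_cont.comp (by fun_prop)).aestronglyMeasurable (fun x => cdf_mem _)

lemma ph_int (hd : Continuous d) (s : ℝ) :
    Integrable (fun x => ph (k * (s - d x))) (stdGaussian (EE n)) :=
  Integrable.of_bound (ph_cont.comp (by fun_prop)).aestronglyMeasurable (ph 0)
    (ae_of_all _ fun x => by
      rw [Real.norm_eq_abs, abs_of_pos (ph_pos _)]; exact ph_le_zero _)

lemma cdf_int (hd : Continuous d) (s : ℝ) :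
    Integrable (fun x => stdNormalCDF (k * (s - d x))) (stdGaussian (EE n)) :=
  Integrable.of_bound (cdf_cont.comp (by fun_prop)).aestronglyMeasurable 1
    (ae_of_all _ fun x => by
      rw [Real.norm_eq_abs, abs_of_pos (cdf_pos _)]; exact (cdf_lt_one _).le)

lemma gg_hasDerivAt (hd : Continuous d) (hk : 0 < k) (s : ℝ) :
    HasDerivAt (gg d k) (k * ∫ x, ph (k * (s - d x)) ∂(stdGaussian (EE n))) s := by
  have hder : ∀ x : EE n, ∀ s : ℝ, HasDerivAt (fun s => stdNormalCDF (k * (s - d x)))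
      (k * ph (k * (s - d x))) s := by
    intro x s
    have h1 : HasDerivAt (fun s : ℝ => k * (s - d x)) (k * 1) s :=
      ((hasDerivAt_id s).sub_const _).const_mul k
    exact ((cdf_hasDerivAt _).comp s h1).congr_deriv (by ring)
  have := (hasDerivAt_integral_of_dominated_loc_of_deriv_le (μ := stdGaussian (EE n))
    (F := fun s x => stdNormalCDF (k * (s - d x))) (F' := fun s x => k * ph (k * (s - d x)))
    (x₀ := s) (bound := fun _ => k * ph 0) (s := Set.univ) univ_mem
    (Eventually.of_forall fun s => (cdf_int hd s).aestronglyMeasurable)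
    (cdf_int hd s) ((ph_int hd s).const_mul k).aestronglyMeasurable
    (ae_of_all _ fun x s _ => by
      rw [Real.norm_eq_abs, abs_of_pos (mul_pos hk (ph_pos _))]
      exact mul_le_mul_of_nonneg_left (ph_le_zero _) hk.le)
    (integrable_const _) (ae_of_all _ fun x s _ => hder x s)).2
  rw [integral_const_mul] at this
  exact this

lemma soft_bobkov (hd : ContDiff ℝ 1 d) (hL : LipschitzWith 1 d)
    (hinf : Tendsto d (cocompact (EE n)) atTop) (hk : 0 < k) (s : ℝ) :
    I (gg d k s) ≤ √(1 + k ^ 2) * ∫ x, ph (k * (s - d x)) ∂(stdGaussian (EE n)) := by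
  have hder : ∀ x, HasFDerivAt (fun x => stdNormalCDF (k * (s - d x)))
      ((-(k * ph (k * (s - d x)))) • fderiv ℝ d x) x := by
    intro x
    have h0 := ((hd.differentiable one_ne_zero) x).hasFDerivAt
    have h1 : HasFDerivAt (fun x => k * (s - d x)) (k • -(fderiv ℝ d x)) x :=
      (h0.const_sub s).const_mul k
    have h2 := (cdf_hasDerivAt (k * (s - d x))).comp_hasFDerivAt x h1
    refine h2.congr_fderiv ?_
    ext v; simp; ring
  have hfd : ∀ x, fderiv ℝ (fun x => stdNormalCDF (k * (s - d x))) x =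
      ((-(k * ph (k * (s - d x)))) • fderiv ℝ d x) := fun x => (hder x).fderiv
  have hdc : Continuous (fderiv ℝ d) := hd.continuous_fderiv one_ne_zero
  have hdn : ∀ x, ‖fderiv ℝ d x‖ ≤ 1 := fun x => by
    simpa using norm_fderiv_le_of_lipschitz ℝ hL (x₀ := x)
  have hfc : Continuous (fderiv ℝ (fun x => stdNormalCDF (k * (s - d x)))) := by
    have hc := hd.continuous
    rw [show fderiv ℝ (fun x => stdNormalCDF (k * (s - d x))) = _ from funext hfd]
    exact ((continuous_const.mul (ph_cont.comp (by fun_prop))).neg).smul hdc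
  have hfn : ∀ x, ‖fderiv ℝ (fun x => stdNormalCDF (k * (s - d x))) x‖ ≤
      k * ph (k * (s - d x)) := by
    intro x
    rw [hfd, norm_smul, norm_neg, Real.norm_eq_abs, abs_of_pos (mul_pos hk (ph_pos _))]
    exact mul_le_of_le_one_right (mul_pos hk (ph_pos _)).le (hdn x)
  have hU : UniformContinuous (fderiv ℝ (fun x => stdNormalCDF (k * (s - d x)))) := by
    refine hfc.uniformContinuous_of_tendsto_cocompact (x := 0) ?_
    refine squeeze_zero_norm hfn ?_
    have h1 : Tendsto (fun x => k * (d x - s)) (cocompact (EE n)) atTop :=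
      (tendsto_atTop_add_const_right _ (-s) hinf).const_mul_atTop hk
    have h2 := (ph_atTop.comp h1).const_mul k
    rw [mul_zero] at h2
    refine h2.congr fun x => ?_
    simp only [Function.comp]
    rw [← ph_neg]; congr 2; ring
  have hcd : ContDiff ℝ 1 (fun x => stdNormalCDF (k * (s - d x))) :=
    contDiff_one_iff_fderiv.2 ⟨fun x => (hder x).differentiableAt, hfc⟩
  have hb := bobkov_gauss hcd (fun x => cdf_mem _) hU (M := k * ph 0) (fun x =>
    (hfn x).trans (mul_le_mul_of_nonneg_left (ph_le_zero _) hk.le))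
  refine hb.trans ?_
  rw [← integral_const_mul]
  refine integral_mono_of_nonneg (ae_of_all _ fun x => Real.sqrt_nonneg _)
    ((ph_int hd.continuous s).const_mul _) (ae_of_all _ fun x => ?_)
  beta_reduce
  rw [I_cdf]
  refine Real.sqrt_le_iff.2 ⟨mul_nonneg (Real.sqrt_nonneg _) (ph_pos _).le, ?_⟩
  rw [mul_pow, Real.sq_sqrt (by positivity)]
  have := pow_le_pow_left₀ (norm_nonneg _) (hfn x) 2
  nlinarith

lemma soft_iso (hd : ContDiff ℝ 1 d) (hL : LipschitzWith 1 d)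
    (hinf : Tendsto d (cocompact (EE n)) atTop) (hk : 0 < k) {a b : ℝ} (hab : a ≤ b) :
    stdNormalCDF (Q (gg d k a) + k / √(1 + k ^ 2) * (b - a)) ≤ gg d k b := by
  have := mono_aux (f := fun s => Q (gg d k s) - k / √(1 + k ^ 2) * s)
    (f' := fun s => (I (gg d k s))⁻¹ * (k * ∫ x, ph (k * (s - d x)) ∂(stdGaussian (EE n)))
      - k / √(1 + k ^ 2) * 1) hab
    (fun s _ => ((Q_hasDerivAt (gg_mem hd.continuous s)).comp s
      (gg_hasDerivAt hd.continuous hk s)).sub ((hasDerivAt_id s).const_mul _))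
    (fun s _ => by
      have h1 := soft_bobkov hd hL hinf hk s
      have h2 := I_pos (gg d k s)
      have h3 : 0 < √(1 + k ^ 2) := by positivity
      rw [sub_nonneg, mul_one, inv_mul_eq_div, div_le_div_iff₀ h3 h2]
      nlinarith)
  beta_reduce at this
  calc _ ≤ stdNormalCDF (Q (gg d k b)) := cdf_strictMono.monotone (by linarith)
    _ = _ := cdf_Q (gg_mem hd.continuous b)

end soft

lemma exists_smooth {n : ℕ} {g : EE n → ℝ} (hg : LipschitzWith 1 g) {δ : ℝ} (hδ : 0 < δ) :
    ∃ d : EE n → ℝ, ContDiff ℝ 1 d ∧ LipschitzWith 1 d ∧ ∀ x, |d x - g x| ≤ δ := by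
  let φ : ContDiffBump (0 : EE n) := ⟨δ / 2, δ, by positivity, by linarith⟩
  let d : EE n → ℝ := (MeasureTheory.convolution (φ.normed volume) g
    (ContinuousLinearMap.lsmul ℝ ℝ) volume)
  have hce : MeasureTheory.ConvolutionExists (φ.normed volume) g
    (ContinuousLinearMap.lsmul ℝ ℝ) volume :=
    HasCompactSupport.convolutionExists_left _ φ.hasCompactSupport_normed φ.continuous_normed
      hg.continuous.locallyIntegrable
  refine ⟨d, ?_, ?_, ?_⟩
  · exact φ.hasCompactSupport_normed.contDiff_convolution_left _ φ.contDiff_normed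
      hg.continuous.locallyIntegrable
  · refine LipschitzWith.of_dist_le_mul fun x y => ?_
    rw [Real.dist_eq]
    simp only [d, MeasureTheory.convolution_def, ContinuousLinearMap.lsmul_apply, smul_eq_mul]
    have e1 := hce x
    have e2 := hce y
    simp only [MeasureTheory.ConvolutionExistsAt, ContinuousLinearMap.lsmul_apply, smul_eq_mul]
      at e1 e2
    rw [← integral_sub e1 e2]
    refine (abs_integral_le_integral_abs).trans ?_
    calc _ ≤ ∫ t, φ.normed volume t * (dist x y) := by
          refine integral_mono_of_nonneg (ae_of_all _ fun t => abs_nonneg _)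
            (φ.integrable_normed.mul_const _) (ae_of_all _ fun t => ?_)
          beta_reduce
          rw [← mul_sub, abs_mul, abs_of_nonneg (φ.nonneg_normed t)]
          refine mul_le_mul_of_nonneg_left ?_ (φ.nonneg_normed t)
          have := hg.dist_le_mul (x - t) (y - t)
          rw [Real.dist_eq] at this
          simpa using this
      _ = _ := by rw [integral_mul_const, φ.integral_normed]; simp
  · intro x
    have := φ.dist_normed_convolution_le (μ := volume) (g := g) (x₀ := x) (ε := δ)
      hg.continuous.aestronglyMeasurable (fun y hy => by
        have := hg.dist_le_mul y x
        rw [Metric.mem_ball] at hy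
        simp at this
        exact this.trans hy.le)
    rwa [Real.dist_eq] at this

end CubeIso

open Filter Topology ProbabilityTheory

namespace CubeIso

section gaussiso
variable {n : ℕ}

lemma infDist_tendsto {K : Set (EE n)} (hK : IsCompact K) (hne : K.Nonempty) {d : EE n → ℝ} {δ : ℝ}
    (h : ∀ x, |d x - Metric.infDist x K| ≤ δ) : Tendsto d (cocompact (EE n)) atTop := by
  obtain ⟨R, hR⟩ := hK.isBounded.exists_norm_le
  refine tendsto_atTop_mono (f := fun x => ‖x‖ + (- R - δ)) (fun x => ?_)
    (tendsto_atTop_add_const_right _ _ (tendsto_norm_cocompact_atTop (E := EE n)))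
  obtain ⟨y, hy, hxy⟩ := hK.exists_infDist_eq_dist hne x
  have h1 := (abs_le.1 (h x)).1
  have h2 := hR y hy
  have h3 : ‖x‖ ≤ dist x y + ‖y‖ := by
    rw [dist_eq_norm]; simpa using norm_add_le (x - y) y
  linarith

lemma gauss_iso_aux {K : Set (EE n)} (hK : IsCompact K) (hne : K.Nonempty) {r δ t : ℝ} (hr : 0 ≤ r)
    (hδ : 0 < δ) (ht : stdNormalCDF t < (stdGaussian (EE n)).real K) :
    stdNormalCDF (t + r) ≤ (stdGaussian (EE n)).real (Metric.cthickening (r + 4 * δ) K) := by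
  obtain ⟨d, hd, hL, hdg⟩ := exists_smooth (n := n) (Metric.lipschitz_infDist_pt K) hδ
  have hinf := infDist_tendsto hK hne hdg
  set C := Metric.cthickening (r + 4 * δ) K with hC
  have hCm : MeasurableSet C := Metric.isClosed_cthickening.measurableSet
  have hKm : MeasurableSet K := hK.isClosed.measurableSet
  have low : ∀ k : ℝ, 0 < k →
      stdNormalCDF (k * δ) * (stdGaussian (EE n)).real K ≤ gg d k (2 * δ) := by
    intro k hk
    have : ∫ x, K.indicator (fun _ => stdNormalCDF (k * δ)) x ∂(stdGaussian (EE n))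
        ≤ gg d k (2 * δ) := by
      refine integral_mono ((integrable_const _).indicator hKm) (cdf_int hd.continuous _) ?_
      intro x
      by_cases hx : x ∈ K
      · simp only [Set.indicator_of_mem hx]
        refine cdf_strictMono.monotone (mul_le_mul_of_nonneg_left ?_ hk.le)
        have := (abs_le.1 (hdg x)).2
        rw [Metric.infDist_zero_of_mem hx] at this
        linarith
      · simp only [Set.indicator_of_notMem hx]
        exact (cdf_pos _).le
    rw [integral_indicator hKm, setIntegral_const, smul_eq_mul, mul_comm] at this
    exact this
  have up : ∀ k : ℝ, 0 < k →
      gg d k (2 * δ + r) ≤ (stdGaussian (EE n)).real C + stdNormalCDF (-(k * δ)) := by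
    intro k hk
    have : gg d k (2 * δ + r) ≤
        ∫ x, (C.indicator (fun _ => (1:ℝ)) x + stdNormalCDF (-(k * δ))) ∂(stdGaussian (EE n)) := by
      refine integral_mono (cdf_int hd.continuous _)
        (((integrable_const _).indicator hCm).add (integrable_const _)) ?_
      intro x
      by_cases hx : x ∈ C
      · simp only [Set.indicator_of_mem hx]
        linarith [cdf_lt_one (k * (2 * δ + r - d x)), cdf_pos (-(k * δ))]
      · simp only [Set.indicator_of_notMem hx, zero_add]
        refine cdf_strictMono.monotone ?_
        rw [← mul_neg]
        refine mul_le_mul_of_nonneg_left ?_ hk.le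
        have h1 := (abs_le.1 (hdg x)).1
        have h2 : r + 4 * δ < Metric.infDist x K := by
          by_contra hcon
          obtain ⟨y, hy, hxy⟩ := hK.exists_infDist_eq_dist hne x
          exact hx (Metric.mem_cthickening_of_dist_le x y _ K hy (by linarith))
        linarith
    rw [integral_add ((integrable_const _).indicator hCm) (integrable_const _),
      integral_indicator hCm, setIntegral_const, smul_eq_mul, mul_one] at this
    simpa using this
  have hkδ : Tendsto (fun k : ℝ => k * δ) atTop atTop := tendsto_id.atTop_mul_const hδ
  have l1 : Tendsto (fun k : ℝ => stdNormalCDF (k * δ) * (stdGaussian (EE n)).real K) atTop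
      (𝓝 (1 * (stdGaussian (EE n)).real K)) := (cdf_atTop.comp hkδ).mul_const _
  rw [one_mul] at l1
  have l2 : Tendsto (fun k : ℝ => (stdGaussian (EE n)).real C + stdNormalCDF (-(k * δ))) atTop
      (𝓝 ((stdGaussian (EE n)).real C + 0)) :=
    (cdf_atBot.comp (tendsto_neg_atTop_atBot.comp hkδ)).const_add _
  rw [add_zero] at l2
  have l3 : Tendsto (fun k : ℝ => k / √(1 + k ^ 2)) atTop (𝓝 1) := by
    have h0 : Tendsto (fun k : ℝ => (√(1 + (k⁻¹) ^ 2))⁻¹) atTop (𝓝 (√(1 + 0 ^ 2))⁻¹) := by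
      have hc : Continuous fun y : ℝ => (√(1 + y ^ 2))⁻¹ := by
        refine Continuous.inv₀ (by fun_prop) fun y => ?_
        positivity
      exact (hc.tendsto 0).comp tendsto_inv_atTop_zero
    simp only [ne_eq, OfNat.ofNat_ne_zero, not_false_eq_true, zero_pow, add_zero, sqrt_one,
      inv_one] at h0
    refine h0.congr' ?_
    filter_upwards [eventually_gt_atTop 0] with k hk
    have : 1 + k ^ 2 = k ^ 2 * (1 + (k⁻¹) ^ 2) := by field_simp; ring
    rw [this, Real.sqrt_mul (by positivity), Real.sqrt_sq hk.le]
    have : √(1 + (k⁻¹) ^ 2) ≠ 0 := by positivity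
    field_simp
  have l4 : Tendsto (fun k : ℝ => stdNormalCDF (t + k / √(1 + k ^ 2) * r)) atTop
      (𝓝 (stdNormalCDF (t + 1 * r))) :=
    (cdf_cont.tendsto _).comp ((l3.mul_const r).const_add t)
  rw [one_mul] at l4
  refine le_of_tendsto_of_tendsto l4 l2 ?_
  filter_upwards [eventually_gt_atTop 0, l1.eventually (lt_mem_nhds ht)] with k hk hk2
  have h1 := soft_iso hd hL hinf hk (a := 2 * δ) (b := 2 * δ + r) (by linarith)
  have h2 : t ≤ Q (gg d k (2 * δ)) := by
    rw [← Q_cdf t]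
    exact Q_le (cdf_mem t) (gg_mem hd.continuous _) (hk2.le.trans (low k hk))
  refine le_trans (cdf_strictMono.monotone ?_) (h1.trans (up k hk))
  rw [add_sub_cancel_left]
  gcongr

lemma gauss_iso {K : Set (EE n)} (hK : IsCompact K) (hne : K.Nonempty) {r t : ℝ} (hr : 0 ≤ r)
    (ht : stdNormalCDF t < (stdGaussian (EE n)).real K) :
    stdNormalCDF (t + r) ≤ (stdGaussian (EE n)).real (Metric.cthickening r K) := by
  have h := tendsto_measure_cthickening_of_isClosed (μ := stdGaussian (EE n))
    (s := Metric.cthickening r K) ⟨1, one_pos, measure_ne_top _ _⟩ Metric.isClosed_cthickening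
  have h2 := (ENNReal.tendsto_toReal (measure_ne_top _ _)).comp h
  have h3 := h2.mono_left (nhdsWithin_le_nhds (s := Set.Ioi 0))
  refine ge_of_tendsto h3 ?_
  filter_upwards [self_mem_nhdsWithin] with s hs
  have hs : 0 < s := hs
  have := gauss_iso_aux hK hne hr (δ := s / 4) (by positivity) ht
  simp only [Function.comp]
  rw [cthickening_cthickening hs.le hr]
  rwa [show r + 4 * (s / 4) = s + r by ring] at this

end gaussiso
end CubeIso

open Filter Topology ProbabilityTheory

namespace CubeIso

lemma map_cdf : (gaussianReal 0 1).map stdNormalCDF = volume.restrict (Set.Icc (0:ℝ) 1) := by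
  have : IsProbabilityMeasure ((gaussianReal 0 1).map stdNormalCDF) :=
    Measure.isProbabilityMeasure_map cdf_cont.aemeasurable
  refine Measure.ext_of_Iic _ _ fun a => ?_
  rw [Measure.map_apply cdf_cont.measurable measurableSet_Iic,
    Measure.restrict_apply measurableSet_Iic]
  rcases le_or_gt a 0 with h0 | h0
  · have e1 : stdNormalCDF ⁻¹' Set.Iic a = ∅ := by
      ext x; simp only [Set.mem_preimage, Set.mem_Iic, Set.mem_empty_iff_false, iff_false, not_le]
      exact h0.trans_lt (cdf_pos x)
    have e2 : volume (Set.Iic a ∩ Set.Icc 0 1) = 0 := by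
      refine measure_mono_null (t := {0}) ?_ (by simp)
      rintro x ⟨h1, h2, _⟩
      simp only [Set.mem_Iic] at h1
      simp only [Set.mem_singleton_iff]; linarith
    rw [e1, e2, measure_empty]
  rcases le_or_gt 1 a with h1 | h1
  · have e1 : stdNormalCDF ⁻¹' Set.Iic a = Set.univ := by
      ext x; simp only [Set.mem_preimage, Set.mem_Iic, Set.mem_univ, iff_true]
      exact (cdf_lt_one x).le.trans h1
    have e2 : Set.Iic a ∩ Set.Icc 0 1 = Set.Icc 0 1 := by
      ext x; simp only [Set.mem_inter_iff, Set.mem_Iic, Set.mem_Icc]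
      constructor
      · exact fun h => h.2
      · exact fun h => ⟨h.2.trans h1, h⟩
    rw [e1, e2, measure_univ]; simp
  · have e1 : stdNormalCDF ⁻¹' Set.Iic a = Set.Iic (Q a) := by
      ext x; simp only [Set.mem_preimage, Set.mem_Iic]
      conv_lhs => rw [← cdf_Q (y := a) ⟨h0, h1⟩]
      exact cdf_strictMono.le_iff_le
    have e2 : Set.Iic a ∩ Set.Icc 0 1 = Set.Icc 0 a := by
      ext x; simp only [Set.mem_inter_iff, Set.mem_Iic, Set.mem_Icc]
      constructor
      · exact fun h => ⟨h.2.1, h.1⟩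
      · exact fun h => ⟨h.2, h.1, h.2.trans h1.le⟩
    rw [e1, e2, ← ofReal_cdf, ← cdf_eq_cdf, cdf_Q ⟨h0, h1⟩]; simp

noncomputable def Psi {n : ℕ} (x : EE n) : Fin n → ℝ := fun i => stdNormalCDF (x i)

lemma Psi_cont {n : ℕ} : Continuous (Psi (n := n)) := by
  unfold Psi
  refine continuous_pi fun i => cdf_cont.comp (by fun_prop)

lemma map_Psi (n : ℕ) : (stdGaussian (EE n)).map Psi
    = volume.restrict (Set.Icc (0 : Fin n → ℝ) 1) := by
  rw [← map_pi_eq_stdGaussian, Measure.map_map Psi_cont.measurable (by fun_prop)]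
  have e : (Psi ∘ WithLp.toLp 2 : (Fin n → ℝ) → Fin n → ℝ)
      = fun x i => stdNormalCDF (x i) := rfl
  have : IsProbabilityMeasure ((gaussianReal 0 1).map stdNormalCDF) :=
    Measure.isProbabilityMeasure_map cdf_cont.aemeasurable
  rw [e, Measure.pi_map_pi (f := fun _ => stdNormalCDF) (fun _ => cdf_cont.aemeasurable), map_cdf,
    ← Measure.restrict_pi_pi, ← volume_pi, Set.pi_univ_Icc]
  rfl

lemma cdf_lip (x y : ℝ) : |stdNormalCDF x - stdNormalCDF y| ≤ (√(2 * π))⁻¹ * |x - y| := by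
  have := Convex.norm_image_sub_le_of_norm_hasDerivWithin_le (f := stdNormalCDF) (f' := ph)
    (s := Set.univ) (C := (√(2 * π))⁻¹) (x := y) (y := x)
    (fun z _ => (cdf_hasDerivAt z).hasDerivWithinAt)
    (fun z _ => by
      rw [Real.norm_eq_abs, abs_of_pos (ph_pos z), ← ph_zero]; exact ph_le_zero z)
    convex_univ trivial trivial
  simpa [Real.norm_eq_abs] using this

lemma lp_le {n : ℕ} (hn : 0 < n) {p ε : ℝ} (hp : 0 < p) (hε : 0 ≤ ε) {x y : Fin n → ℝ}
    (h : ∑ i, |x i - y i| ^ 2 ≤ n * ε ^ 2 / ((n:ℝ) ^ (1 / min p 2)) ^ 2) : lpDist p x y ≤ ε := by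
  have hn' : (0:ℝ) < n := by exact_mod_cast hn
  unfold lpDist
  set u : Fin n → ℝ := fun i => |x i - y i| with hu
  have hu0 : ∀ i, 0 ≤ u i := fun i => abs_nonneg _
  change (∑ i, u i ^ p) ^ (1 / p) ≤ ε
  change ∑ i, u i ^ 2 ≤ _ at h
  have hT : 0 ≤ ∑ i, u i ^ p := Finset.sum_nonneg fun i _ => rpow_nonneg (hu0 i) _
  rcases le_or_gt p 2 with h2 | h2
  · rw [min_eq_left h2] at h
    have key := Real.rpow_sum_le_const_mul_sum_rpow_of_nonneg (s := Finset.univ)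
      (f := fun i => u i ^ p) (p := 2 / p) (by rw [le_div_iff₀ hp]; linarith)
      (fun i _ => rpow_nonneg (hu0 i) _)
    have e1 : ∀ i, (u i ^ p) ^ (2 / p) = u i ^ 2 := fun i => by
      rw [← rpow_mul (hu0 i), mul_div_cancel₀ _ hp.ne']; exact rpow_two _
    simp only [e1, Finset.card_univ, Fintype.card_fin] at key
    refine le_of_sq_le_sq ?_ hε
    rw [← rpow_two, ← rpow_mul hT, show 1 / p * 2 = 2 / p by ring]
    refine key.trans ?_
    calc (n:ℝ) ^ (2 / p - 1) * ∑ i, u i ^ 2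
        ≤ (n:ℝ) ^ (2 / p - 1) * (n * ε ^ 2 / ((n:ℝ) ^ (1 / p)) ^ 2) := by gcongr
      _ = ε ^ 2 := by
        rw [rpow_sub_one hn'.ne', ← rpow_two ((n:ℝ) ^ (1 / p)), ← rpow_mul hn'.le,
          show 1 / p * 2 = 2 / p by ring]
        have : (n:ℝ) ^ (2 / p) ≠ 0 := (rpow_pos_of_pos hn' _).ne'
        field_simp
  · rw [min_eq_right h2.le, ← rpow_two ((n:ℝ) ^ (1 / 2 : ℝ)), ← rpow_mul hn'.le] at h
    norm_num at h
    rw [mul_div_cancel_left₀ _ hn'.ne'] at h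
    have hui : ∀ i, u i ≤ ε := fun i => by
      refine le_of_sq_le_sq (le_trans ?_ h) hε
      exact Finset.single_le_sum (f := fun i => u i ^ 2) (fun j _ => sq_nonneg _) (Finset.mem_univ i)
    have split : ∀ z : ℝ, 0 ≤ z → z ^ p = z ^ 2 * z ^ (p - 2) := fun z hz => by
      rw [← rpow_two, ← rpow_add_of_nonneg hz (by norm_num) (by linarith)]; congr 1; ring
    have : ∑ i, u i ^ p ≤ ε ^ p := by
      rw [split ε hε]
      calc ∑ i, u i ^ p ≤ ∑ i, u i ^ 2 * ε ^ (p - 2) := by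
            refine Finset.sum_le_sum fun i _ => ?_
            rw [split _ (hu0 i)]
            exact mul_le_mul_of_nonneg_left
              (rpow_le_rpow (hu0 i) (hui i) (by linarith)) (sq_nonneg _)
        _ = (∑ i, u i ^ 2) * ε ^ (p - 2) := by rw [Finset.sum_mul]
        _ ≤ _ := mul_le_mul_of_nonneg_right h (rpow_nonneg hε _)
    calc (∑ i, u i ^ p) ^ (1 / p) ≤ (ε ^ p) ^ (1 / p) := rpow_le_rpow hT this (by positivity)
      _ = ε := by rw [← rpow_mul hε, mul_one_div_cancel hp.ne', rpow_one]

lemma Psi_dist {n : ℕ} (hn : 0 < n) {p ε : ℝ} (hp : 0 < p) (hε : 0 ≤ ε) {x y : EE n}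
    (h : dist x y ≤ √(2 * π * n) * ε / (n:ℝ) ^ (1 / min p 2)) :
    lpDist p (Psi x) (Psi y) ≤ ε := by
  refine lp_le hn hp hε ?_
  have h2 : ∑ i, |x i - y i| ^ 2 = dist x y ^ 2 := by
    rw [EuclideanSpace.dist_eq, Real.sq_sqrt (Finset.sum_nonneg fun i _ => sq_nonneg _)]
    rfl
  have h3 : dist x y ^ 2 ≤ (√(2 * π * n) * ε / (n:ℝ) ^ (1 / min p 2)) ^ 2 := by gcongr
  rw [div_pow, mul_pow, Real.sq_sqrt (by positivity)] at h3
  calc ∑ i, |Psi x i - Psi y i| ^ 2 ≤ ∑ i, ((√(2 * π))⁻¹ * |x i - y i|) ^ 2 := by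
        refine Finset.sum_le_sum fun i _ => ?_
        have := cdf_lip (x i) (y i)
        exact pow_le_pow_left₀ (abs_nonneg _) this 2
    _ = (2 * π)⁻¹ * dist x y ^ 2 := by
        simp only [mul_pow]
        rw [← Finset.mul_sum, h2, inv_pow, Real.sq_sqrt (by positivity)]
    _ ≤ (2 * π)⁻¹ * (2 * π * n * ε ^ 2 / ((n:ℝ) ^ (1 / min p 2)) ^ 2) := by gcongr
    _ = _ := by field_simp

theorem final (n : ℕ) (A : Set (Fin n → ℝ))
    (hA : MeasurableSet A) (hAcube : A ⊆ Set.Icc 0 1)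
    (p : ℝ) (hp : 0 < p) (ε : ℝ) (hε : 0 ≤ ε) (α : ℝ)
    (hα : stdNormalCDF α = (volume A).toReal) :
    volume {x ∈ Set.Icc (0 : Fin n → ℝ) 1 | ∃ y ∈ A, lpDist p x y ≤ ε} ≥
      ENNReal.ofReal
        (stdNormalCDF (α + Real.sqrt (2 * Real.pi * n) * ε / (n : ℝ) ^ (1 / min p 2))) := by
  rcases Nat.eq_zero_or_pos n with rfl | hn
  · exfalso
    have h0 := cdf_pos α
    have h1 := cdf_lt_one α
    rcases Set.eq_empty_or_nonempty A with hE | hE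
    · rw [hα, hE] at h0; simp at h0
    · rw [hα, Subsingleton.eq_univ_of_nonempty hE, volume_pi] at h1; simp at h1
  set r := Real.sqrt (2 * Real.pi * n) * ε / (n : ℝ) ^ (1 / min p 2) with hr
  have hr0 : 0 ≤ r := by positivity
  set S := {x ∈ Set.Icc (0 : Fin n → ℝ) 1 | ∃ y ∈ A, lpDist p x y ≤ ε} with hS
  have hB : stdGaussian (EE n) (Psi ⁻¹' A) = volume A := by
    rw [← Measure.map_apply Psi_cont.measurable hA, map_Psi, Measure.restrict_apply hA,
      Set.inter_eq_left.2 hAcube]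
  have hAfin : volume A ≠ ⊤ := by rw [← hB]; exact measure_ne_top _ _
  have main : ∀ t < α, ENNReal.ofReal (stdNormalCDF (t + r)) ≤ volume S := by
    intro t ht
    have h1 : ENNReal.ofReal (stdNormalCDF t) < stdGaussian (EE n) (Psi ⁻¹' A) := by
      rw [hB, ENNReal.ofReal_lt_iff_lt_toReal (cdf_pos t).le hAfin, ← hα]
      exact cdf_strictMono ht
    obtain ⟨K, hKA, hK, hlt⟩ :=
      (Psi_cont.measurable hA).exists_lt_isCompact h1
    have hne : K.Nonempty := by
      rcases Set.eq_empty_or_nonempty K with h | h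
      · rw [h] at hlt; simp at hlt
      · exact h
    have hlt' : stdNormalCDF t < (stdGaussian (EE n)).real K :=
      (ENNReal.ofReal_lt_iff_lt_toReal (cdf_pos t).le (measure_ne_top _ _)).1 hlt
    have h2 := gauss_iso hK hne hr0 hlt'
    have h3 : Metric.cthickening r K ⊆ Psi ⁻¹' S := by
      rw [hK.cthickening_eq_biUnion_closedBall hr0]
      intro x hx
      simp only [Set.mem_iUnion, Metric.mem_closedBall, exists_prop] at hx
      obtain ⟨y, hy, hxy⟩ := hx
      refine ⟨⟨fun i => (cdf_pos _).le, fun i => (cdf_lt_one _).le⟩, Psi y, hKA hy, ?_⟩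
      exact Psi_dist hn hp hε hxy
    calc ENNReal.ofReal (stdNormalCDF (t + r))
        ≤ stdGaussian (EE n) (Metric.cthickening r K) :=
          ENNReal.ofReal_le_of_le_toReal h2
      _ ≤ stdGaussian (EE n) (Psi ⁻¹' S) := measure_mono h3
      _ ≤ (stdGaussian (EE n)).map Psi S := Measure.le_map_apply Psi_cont.aemeasurable S
      _ ≤ volume S := by rw [map_Psi]; exact Measure.restrict_apply_le _ _
  have lim : Tendsto (fun t => ENNReal.ofReal (stdNormalCDF (t + r))) (𝓝[<] α)
      (𝓝 (ENNReal.ofReal (stdNormalCDF (α + r)))) := by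
    have hc : Continuous fun t => ENNReal.ofReal (stdNormalCDF (t + r)) :=
      ENNReal.continuous_ofReal.comp (cdf_cont.comp (by fun_prop))
    exact (hc.tendsto α).mono_left nhdsWithin_le_nhds
  refine le_of_tendsto lim ?_
  filter_upwards [self_mem_nhdsWithin] with t ht using main t ht

end CubeIso

end Helpers

theorem cube_isoperimetric (n : ℕ) (A : Set (Fin n → ℝ))
    (hA : MeasurableSet A) (hAcube : A ⊆ Set.Icc 0 1)
    (p : ℝ) (hp : 0 < p) (ε : ℝ) (hε : 0 ≤ ε) (α : ℝ)
    (hα : stdNormalCDF α = (volume A).toReal) :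
    volume {x ∈ Set.Icc (0 : Fin n → ℝ) 1 | ∃ y ∈ A, lpDist p x y ≤ ε} ≥
      ENNReal.ofReal
        (stdNormalCDF (α + Real.sqrt (2 * Real.pi * n) * ε / (n : ℝ) ^ (1 / min p 2))) := by
  exact CubeIso.final n A hA hAcube p hp ε hε α hα
end

section
/- (Sparse adversarial examples) Let ρ be a probability density on [0,1]ⁿ with supremum U, and R ⊂ [0,1]ⁿ measurable with vol[R] ≤ 1/2. Then the probability under ρ that a sample lies in R and cannot be moved into Rᶜ by changing at most ε coordinates is at most 2U·exp(-ε²/n). -/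
open Real MeasureTheory

/-- The Hamming (ℓ₀) distance on ℝⁿ: the number of differing coordinates. -/
noncomputable def l0Dist {n : ℕ} (x y : Fin n → ℝ) : ℕ :=
  (Finset.univ.filter fun i => x i ≠ y i).card

noncomputable def hDist {n : ℕ} (A : Set (Fin n → ℝ)) (x : Fin n → ℝ) : ℕ :=
  sInf {k | ∃ y ∈ A, l0Dist x y ≤ k}

lemma hDist_le {n : ℕ} {A : Set (Fin n → ℝ)} {x y : Fin n → ℝ} (hy : y ∈ A) :
    hDist A x ≤ l0Dist x y := Nat.sInf_le ⟨y, hy, le_rfl⟩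

lemma hDist_exists {n : ℕ} {A : Set (Fin n → ℝ)} (hA : A.Nonempty) (x : Fin n → ℝ) :
    ∃ y ∈ A, l0Dist x y ≤ hDist A x := by
  obtain ⟨y, hy⟩ := hA
  exact Nat.sInf_mem (s := {k | ∃ y ∈ A, l0Dist x y ≤ k}) ⟨l0Dist x y, y, hy, le_rfl⟩

lemma isClosed_l0 {n : ℕ} (k : ℕ) :
    IsClosed {p : (Fin n → ℝ) × (Fin n → ℝ) | l0Dist p.1 p.2 ≤ k} := by
  have : {p : (Fin n → ℝ) × (Fin n → ℝ) | l0Dist p.1 p.2 ≤ k} =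
      ⋃ I ∈ {I : Finset (Fin n) | I.card ≤ k}, {p | ∀ i, i ∉ I → p.1 i = p.2 i} := by
    ext p
    simp only [Set.mem_setOf_eq, Set.mem_iUnion, exists_prop]
    constructor
    · intro h
      exact ⟨_, h, by simp⟩
    · rintro ⟨I, hI, h⟩
      refine le_trans (Finset.card_le_card ?_) hI
      intro i hi
      by_contra hc
      simp at hi
      exact hi (h i hc)
  rw [this]
  refine Set.Finite.isClosed_biUnion (Set.toFinite _) ?_
  intro I _
  simp only [Set.setOf_forall]
  refine isClosed_iInter fun i => isClosed_iInter fun _ => isClosed_eq (by fun_prop) (by fun_prop)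

lemma isClosed_nbhd {n : ℕ} {K : Set (Fin n → ℝ)} (hK : IsCompact K) (k : ℕ) :
    IsClosed {x | ∃ y ∈ K, l0Dist x y ≤ k} := by
  haveI : CompactSpace K := isCompact_iff_compactSpace.mp hK
  have h1 : IsClosed {p : (Fin n → ℝ) × K | l0Dist p.1 p.2 ≤ k} :=
    (isClosed_l0 k).preimage (f := fun p : (Fin n → ℝ) × K => (p.1, (p.2 : Fin n → ℝ)))
      (by fun_prop)
  have h2 := isClosedMap_fst_of_compactSpace _ h1
  convert h2 using 1
  ext x
  simp

lemma measurable_hDist {n : ℕ} {K : Set (Fin n → ℝ)} (hK : IsCompact K) :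
    Measurable (hDist K) := by
  rcases K.eq_empty_or_nonempty with rfl | hne
  · have : hDist (∅ : Set (Fin n → ℝ)) = fun _ => 0 := by
      ext x; simp [hDist]
    rw [this]; exact measurable_const
  · refine measurable_of_Iic fun k => ?_
    have : hDist K ⁻¹' Set.Iic k = {x | ∃ y ∈ K, l0Dist x y ≤ k} := by
      ext x
      simp only [Set.mem_preimage, Set.mem_Iic, Set.mem_setOf_eq]
      constructor
      · intro h
        obtain ⟨y, hy, h'⟩ := hDist_exists hne x
        exact ⟨y, hy, h'.trans h⟩
      · rintro ⟨y, hy, h⟩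
        exact (hDist_le hy).trans h
    rw [this]
    exact (isClosed_nbhd hK k).measurableSet

lemma l0Dist_cons {n : ℕ} (ω : ℝ) (x : Fin n → ℝ) (y : Fin (n+1) → ℝ) :
    l0Dist (Fin.cons ω x : Fin (n+1) → ℝ) y = (if ω ≠ y 0 then 1 else 0) + l0Dist x (Fin.tail y) := by
  simp only [l0Dist, Finset.card_filter, Fin.sum_univ_succ, Fin.cons_zero, Fin.cons_succ]
  rfl

lemma real_pt {b g H C s : ℝ} (hb : 0 < b) (hg0 : 0 ≤ g) (hgb : g ≤ b) (hC : 0 ≤ C) (hs : 1 ≤ s)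
    (hH : 0 ≤ H)
    (h1 : g * H ≤ C) (h2 : b * H ≤ s * C) : b ^ 2 * H + C * s * g ≤ C * (1 + s) * b := by
  by_cases hc : b ≤ s * g
  · have hg : 0 < g := by
      rcases hg0.eq_or_lt with h | h
      · rw [← h] at hc; linarith
      · exact h
    have : g * (b ^ 2 * H + C * s * g) ≤ g * (C * (1 + s) * b) := by
      have e1 : b^2 * (g * H) ≤ b^2 * C := by gcongr
      have e2 : 0 ≤ C * ((b - g) * (s * g - b)) :=
        mul_nonneg hC (mul_nonneg (by linarith) (by linarith))
      nlinarith
    exact le_of_mul_le_mul_left this hg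
  · push Not at hc
    have e1 : b * (b * H) ≤ b * (s * C) := by gcongr
    have e2 : C * (s * g) ≤ C * b := by gcongr
    nlinarith

lemma real_fin {b p J C s : ℝ} (hb : 0 < b) (hp : 0 ≤ p) (hC : 0 ≤ C) (hs : 1 ≤ s)
    (h : b ^ 2 * J + C * s * p ≤ C * (1 + s) * b) : p * J ≤ C * ((1 + s) ^ 2 / (4 * s)) := by
  have hs0 : 0 < s := by linarith
  have e : b ^ 2 * (4 * s) * (p * J) ≤ b ^ 2 * (4 * s) * (C * ((1 + s) ^ 2 / (4 * s))) := by
    have e1 : b ^ 2 * (4 * s) * (C * ((1 + s) ^ 2 / (4 * s))) = b ^ 2 * C * (1 + s)^2 := by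
      field_simp
    rw [e1]
    have e2 : (4 * s * p) * (b ^ 2 * J + C * s * p) ≤ (4 * s * p) * (C * (1 + s) * b) := by gcongr
    have e3 : 0 ≤ C * ((1 + s) * b - 2 * s * p) ^ 2 := mul_nonneg hC (sq_nonneg _)
    nlinarith
  exact le_of_mul_le_mul_left e (by positivity)

lemma talagrand (μ : Measure ℝ) [IsProbabilityMeasure μ] {t : ℝ} (ht : 0 ≤ t) (n : ℕ) :
    ∀ A : Set (Fin n → ℝ), IsCompact A →
    (Measure.pi (fun _ => μ)) A * ∫⁻ x, ENNReal.ofReal (exp (t * hDist A x)) ∂(Measure.pi fun _ => μ)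
      ≤ ENNReal.ofReal (((1 + exp t) ^ 2 / (4 * exp t)) ^ n) := by
  induction n with
  | zero =>
    intro A _
    have h0 : ∀ x, hDist A x = 0 := by
      intro x
      rcases A.eq_empty_or_nonempty with rfl | ⟨y, hy⟩
      · simp [hDist]
      · have := hDist_le (x := x) hy
        simpa [l0Dist] using this
    simp only [h0]
    simp only [CharP.cast_eq_zero, mul_zero, exp_zero, ENNReal.ofReal_one, lintegral_const,
      measure_univ, mul_one, pow_zero]
    exact prob_le_one
  | succ n ih =>
    intro A hA
    set s := exp t with hs
    have hs1 : 1 ≤ s := one_le_exp ht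
    set C := ((1 + s) ^ 2 / (4 * s)) ^ n with hCdef
    have hC : 0 ≤ C := by positivity
    set P := Measure.pi (fun _ : Fin n => μ) with hP
    set Q := Measure.pi (fun _ : Fin (n+1) => μ) with hQ
    have hmp : MeasurePreserving (fun p : ℝ × (Fin n → ℝ) => (Fin.cons p.1 p.2 : Fin (n+1) → ℝ))
        (μ.prod P) Q := by
      have := (measurePreserving_piFinSuccAbove (fun _ : Fin (n+1) => μ) 0).symm
      convert this using 1
      ext p : 1
      simp [MeasurableEquiv.piFinSuccAbove_symm_apply]
      rfl
    let D : ℝ → Set (Fin n → ℝ) := fun ω => {x | (Fin.cons ω x : Fin (n+1) → ℝ) ∈ A}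
    let B : Set (Fin n → ℝ) := Fin.tail '' A
    have htail : Continuous (Fin.tail : (Fin (n+1) → ℝ) → (Fin n → ℝ)) := by
      unfold Fin.tail; fun_prop
    have hB : IsCompact B := hA.image htail
    have hD : ∀ ω, IsCompact (D ω) := by
      intro ω
      have : D ω = Fin.tail '' (A ∩ {y | y 0 = ω}) := by
        ext x
        simp only [D, Set.mem_setOf_eq, Set.mem_image, Set.mem_inter_iff]
        constructor
        · intro h; exact ⟨_, ⟨h, by simp⟩, by simp⟩
        · rintro ⟨y, ⟨hy, rfl⟩, rfl⟩
          simpa using hy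
      rw [this]
      exact (hA.inter_right (isClosed_eq (by fun_prop) (by fun_prop))).image htail
    have hDB : ∀ ω, D ω ⊆ B := fun ω x hx => ⟨_, hx, by simp⟩
    let f : ℝ × (Fin n → ℝ) → ENNReal :=
      fun p => ENNReal.ofReal (exp (t * hDist A (Fin.cons p.1 p.2)))
    have hfA : Measurable fun x => ENNReal.ofReal (exp (t * hDist A x)) := by
      have := measurable_hDist hA
      have h2 : Measurable fun x => (hDist A x : ℝ) := measurable_from_nat.comp this
      fun_prop
    have hf : Measurable f := hfA.comp hmp.measurable
    let g : ℝ → ENNReal := fun ω => P (D ω)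
    let H : ℝ → ENNReal := fun ω => ∫⁻ x, f (ω, x) ∂P
    have hAm : MeasurableSet ((fun p : ℝ × (Fin n → ℝ) => (Fin.cons p.1 p.2 : Fin (n+1) → ℝ)) ⁻¹' A) :=
      hmp.measurable hA.measurableSet
    have hgm : Measurable g := measurable_measure_prodMk_left hAm
    have hHm : Measurable H := hf.lintegral_prod_right'
    have hp : Q A = ∫⁻ ω, g ω ∂μ := by
      rw [← hmp.measure_preimage hA.measurableSet.nullMeasurableSet, Measure.prod_apply hAm]
      rfl
    have hJ : ∫⁻ x, ENNReal.ofReal (exp (t * hDist A x)) ∂Q = ∫⁻ ω, H ω ∂μ := by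
      rw [← hmp.lintegral_comp hfA, lintegral_prod _ hf.aemeasurable]
    rcases eq_or_ne (P B) 0 with hb0 | hb0
    · have : Q A = 0 := by
        rw [hp]
        have : ∀ ω, g ω = 0 := fun ω => measure_mono_null (hDB ω) hb0
        simp [this]
      rw [this]; simp
    have hAne : A.Nonempty := by
      by_contra hc
      rw [Set.not_nonempty_iff_eq_empty] at hc
      simp [B, hc] at hb0
    have hgH : ∀ ω, g ω * H ω ≤ ENNReal.ofReal C := by
      intro ω
      rcases (D ω).eq_empty_or_nonempty with he | hne
      · simp [g, he]
      · refine le_trans ?_ (ih (D ω) (hD ω))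
        refine mul_le_mul_right (lintegral_mono fun x => ?_) _
        refine ENNReal.ofReal_le_ofReal (exp_le_exp.mpr (mul_le_mul_of_nonneg_left ?_ ht))
        obtain ⟨y, hy, hxy⟩ := hDist_exists hne x
        have h1 : hDist A (Fin.cons ω x) ≤ _ := hDist_le (x := (Fin.cons ω x : Fin (n+1) → ℝ)) hy
        rw [l0Dist_cons] at h1
        simp at h1
        exact_mod_cast h1.trans hxy
    have hbH : ∀ ω, P B * H ω ≤ ENNReal.ofReal (s * C) := by
      intro ω
      rw [ENNReal.ofReal_mul (by positivity)]
      refine le_trans ?_ (mul_le_mul_right (ih B hB) _)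
      rw [mul_left_comm]
      refine mul_le_mul_right ?_ _
      rw [← lintegral_const_mul' _ _ ENNReal.ofReal_ne_top]
      refine lintegral_mono fun x => ?_
      rw [← ENNReal.ofReal_mul (by positivity), hs, ← exp_add]
      refine ENNReal.ofReal_le_ofReal (exp_le_exp.mpr ?_)
      obtain ⟨y, ⟨z, hz, rfl⟩, hxy⟩ := hDist_exists (hAne.image Fin.tail) x
      have h1 : hDist A (Fin.cons ω x) ≤ _ := hDist_le (x := (Fin.cons ω x : Fin (n+1) → ℝ)) hz
      rw [l0Dist_cons] at h1
      have h2 : hDist A (Fin.cons ω x) ≤ 1 + hDist B x := by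
        refine h1.trans (add_le_add ?_ hxy)
        split_ifs <;> simp
      have h3 : (hDist A (Fin.cons ω x) : ℝ) ≤ 1 + hDist B x := by exact_mod_cast h2
      nlinarith
    have hbt : P B ≠ ⊤ := measure_ne_top _ _
    have hHt : ∀ ω, H ω ≠ ⊤ := by
      intro ω h
      have := hbH ω
      rw [h, ENNReal.mul_top hb0] at this
      simp at this
    have hgt : ∀ ω, g ω ≠ ⊤ := fun ω => measure_ne_top _ _
    have hbpos : 0 < (P B).toReal := ENNReal.toReal_pos hb0 hbt
    have key : ∀ ω, (P B) ^ 2 * H ω + ENNReal.ofReal (C * s) * g ω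
        ≤ ENNReal.ofReal (C * (1 + s) * (P B).toReal) := by
      intro ω
      have := real_pt (b := (P B).toReal) (g := (g ω).toReal) (H := (H ω).toReal) hbpos
        ENNReal.toReal_nonneg (ENNReal.toReal_mono hbt (measure_mono (hDB ω))) hC hs1
        ENNReal.toReal_nonneg
        (by rw [← ENNReal.toReal_mul]; exact ENNReal.toReal_le_of_le_ofReal hC (hgH ω))
        (by rw [← ENNReal.toReal_mul]
            exact ENNReal.toReal_le_of_le_ofReal (by positivity) (hbH ω))
      refine le_trans (le_of_eq ?_) (ENNReal.ofReal_le_ofReal this)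
      rw [ENNReal.ofReal_add (by positivity) (by positivity),
        ENNReal.ofReal_mul (p := (P B).toReal ^ 2) (by positivity),
        ENNReal.ofReal_mul (p := C * s) (by positivity), ENNReal.ofReal_pow ENNReal.toReal_nonneg,
        ENNReal.ofReal_toReal hbt, ENNReal.ofReal_toReal (hHt ω), ENNReal.ofReal_toReal (hgt ω)]
    have key2 : (P B) ^ 2 * (∫⁻ ω, H ω ∂μ) + ENNReal.ofReal (C * s) * (∫⁻ ω, g ω ∂μ)
        ≤ ENNReal.ofReal (C * (1 + s) * (P B).toReal) := by
      have := lintegral_mono (μ := μ) key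
      rw [lintegral_add_left (by fun_prop), lintegral_const_mul _ hHm,
        lintegral_const_mul _ hgm] at this
      simpa using this
    rw [hJ, hp]
    have hJt : ∫⁻ ω, H ω ∂μ ≠ ⊤ := by
      intro h
      rw [h, ENNReal.mul_top (pow_ne_zero _ hb0)] at key2
      simp at key2
    have hpt : ∫⁻ ω, g ω ∂μ ≠ ⊤ := by rw [← hp]; exact measure_ne_top _ _
    have key3 := ENNReal.toReal_le_of_le_ofReal (by positivity) key2
    rw [ENNReal.toReal_add (ENNReal.mul_ne_top (ENNReal.pow_ne_top hbt) hJt)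
      (ENNReal.mul_ne_top ENNReal.ofReal_ne_top hpt), ENNReal.toReal_mul, ENNReal.toReal_mul,
      ENNReal.toReal_pow, ENNReal.toReal_ofReal (by positivity)] at key3
    have := real_fin hbpos ENNReal.toReal_nonneg hC hs1 key3
    rw [← ENNReal.toReal_mul] at this
    rw [pow_succ]
    exact (ENNReal.le_ofReal_iff_toReal_le (ENNReal.mul_ne_top hpt hJt) (by positivity)).mpr this

lemma a_le (t : ℝ) : (1 + exp t) ^ 2 / (4 * exp t) ≤ exp (t ^ 2 / 4) := by
  have h := Real.cosh_le_exp_half_sq (t / 2)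
  have h0 : 0 < cosh (t / 2) := cosh_pos _
  have e : (1 + exp t) ^ 2 / (4 * exp t) = cosh (t / 2) ^ 2 := by
    rw [cosh_eq, exp_neg]
    have : exp t = exp (t / 2) ^ 2 := by rw [← exp_nat_mul]; congr 1; push_cast; ring
    rw [this]
    have := exp_pos (t / 2)
    field_simp
    ring
  rw [e]
  calc cosh (t / 2) ^ 2 ≤ exp ((t / 2) ^ 2 / 2) ^ 2 := by gcongr
    _ = exp (t ^ 2 / 4) := by rw [← exp_nat_mul]; congr 1; push_cast; ring

lemma tail_bound (μ : Measure ℝ) [IsProbabilityMeasure μ] (n : ℕ) (A : Set (Fin n → ℝ))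
    (hA : IsCompact A) (ε : ℕ) :
    (Measure.pi (fun _ => μ)) A * (Measure.pi fun _ => μ) {x | ε ≤ hDist A x}
      ≤ ENNReal.ofReal (exp (-(ε : ℝ) ^ 2 / n)) := by
  rcases Nat.eq_zero_or_pos n with rfl | hn
  · simp only [CharP.cast_eq_zero, div_zero, exp_zero, ENNReal.ofReal_one]
    exact mul_le_one' prob_le_one prob_le_one
  have hn' : (0 : ℝ) < n := by exact_mod_cast hn
  set t : ℝ := 2 * ε / n with ht
  have ht0 : 0 ≤ t := by positivity
  have h1 := talagrand μ ht0 n A hA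
  have hfA : Measurable fun x => ENNReal.ofReal (exp (t * hDist A x)) := by
    have h2 : Measurable fun x => (hDist A x : ℝ) := measurable_from_nat.comp (measurable_hDist hA)
    fun_prop
  set P := Measure.pi (fun _ : Fin n => μ)
  have h2 := mul_meas_ge_le_lintegral (μ := P) hfA (ENNReal.ofReal (exp (t * ε)))
  have h3 : P {x | ε ≤ hDist A x} ≤
      P {x | ENNReal.ofReal (exp (t * ε)) ≤ ENNReal.ofReal (exp (t * hDist A x))} := by
    refine measure_mono fun x hx => ?_
    have hx' : (ε : ℝ) ≤ hDist A x := by exact_mod_cast hx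
    exact ENNReal.ofReal_le_ofReal (exp_le_exp.mpr (mul_le_mul_of_nonneg_left hx' ht0))
  have h4 : ENNReal.ofReal (exp (t * ε)) * (P A * P {x | ε ≤ hDist A x}) ≤
      ENNReal.ofReal (exp (t ^ 2 / 4 * n)) := by
    calc _ = P A * (ENNReal.ofReal (exp (t * ε)) * P {x | ε ≤ hDist A x}) := by ring
      _ ≤ P A * ∫⁻ x, ENNReal.ofReal (exp (t * hDist A x)) ∂P := by
        gcongr
        exact (mul_le_mul_right h3 _).trans h2
      _ ≤ _ := h1
      _ ≤ _ := by
        refine ENNReal.ofReal_le_ofReal ?_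
        rw [mul_comm (t ^ 2 / 4) (n : ℝ), exp_nat_mul]
        gcongr
        exact a_le t
  have h5 : ENNReal.ofReal (exp (t ^ 2 / 4 * n)) =
      ENNReal.ofReal (exp (t * ε)) * ENNReal.ofReal (exp (-(ε : ℝ) ^ 2 / n)) := by
    rw [← ENNReal.ofReal_mul (by positivity), ← exp_add]
    congr 2
    rw [ht]; field_simp; ring
  rw [h5] at h4
  exact (ENNReal.mul_le_mul_iff_right (by simp [exp_pos]) ENNReal.ofReal_ne_top).mp h4

theorem sparse_adversarial_examples (n : ℕ) (ρ : (Fin n → ℝ) → ℝ)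
    (hρmeas : Measurable ρ) (hρ0 : ∀ x, 0 ≤ ρ x)
    (hρsupp : ∀ x, ρ x ≠ 0 → x ∈ Set.Icc (0 : Fin n → ℝ) 1)
    (hρint : ∫ x in Set.Icc (0 : Fin n → ℝ) 1, ρ x = 1)
    (U : ℝ) (hU : ∀ x, ρ x ≤ U)
    (R : Set (Fin n → ℝ)) (hR : MeasurableSet R) (hRsub : R ⊆ Set.Icc 0 1)
    (hRvol : volume R ≤ ENNReal.ofReal (1 / 2)) (ε : ℕ) :
    (∫ x in {x ∈ R | ∀ y ∈ Set.Icc (0 : Fin n → ℝ) 1 \ R, l0Dist x y > ε}, ρ x) ≤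
      2 * U * Real.exp (-(ε : ℝ) ^ 2 / n) := by
  set S := {x ∈ R | ∀ y ∈ Set.Icc (0 : Fin n → ℝ) 1 \ R, l0Dist x y > ε} with hS
  have hU0 : 0 ≤ U := (hρ0 0).trans (hU 0)
  let μ : Measure ℝ := volume.restrict (Set.Icc 0 1)
  haveI : IsProbabilityMeasure μ := ⟨by simp [μ]⟩
  have hpi : (volume : Measure (Fin n → ℝ)).restrict (Set.Icc 0 1) = Measure.pi (fun _ => μ) := by
    rw [← Measure.restrict_pi_pi, Set.pi_univ_Icc]
    rfl
  have hcube : volume (Set.Icc (0 : Fin n → ℝ) 1) = 1 := by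
    rw [← Measure.restrict_apply_univ, hpi]; exact measure_univ
  have hRhalf : volume R ≤ 1 / 2 := by
    refine hRvol.trans (le_of_eq ?_)
    rw [ENNReal.ofReal_div_of_pos (by norm_num)]; simp
  have hRt : volume R ≠ ⊤ := ne_top_of_le_ne_top (by simp) hRhalf
  have hAvol : 1 / 2 ≤ volume (Set.Icc (0 : Fin n → ℝ) 1 \ R) := by
    rw [measure_diff hRsub hR.nullMeasurableSet hRt, hcube]
    calc (1 / 2 : ENNReal) = 1 - 1 / 2 := by simp
      _ ≤ _ := tsub_le_tsub_left hRhalf _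
  have hbd : ∀ r : ENNReal, r < 1 / 2 → r * volume S ≤ ENNReal.ofReal (exp (-(ε : ℝ) ^ 2 / n)) := by
    intro r hr
    obtain ⟨K, hKA, hK, hrK⟩ := (measurableSet_Icc.diff hR).exists_lt_isCompact (hr.trans_le hAvol)
    have h1 := tail_bound μ n K hK ε
    refine le_trans (mul_le_mul' ?_ ?_) h1
    · rw [← hpi, Measure.restrict_apply hK.measurableSet,
        Set.inter_eq_left.mpr (hKA.trans Set.diff_subset)]
      exact hrK.le
    · have hm : MeasurableSet {x | ε ≤ hDist K x} := measurable_hDist hK measurableSet_Ici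
      rw [← hpi, Measure.restrict_apply hm]
      refine measure_mono fun x hx => ⟨?_, hRsub hx.1⟩
      have hKne : K.Nonempty := by
        by_contra hc
        rw [Set.not_nonempty_iff_eq_empty] at hc
        simp [hc] at hrK
      obtain ⟨y, hy, hxy⟩ := hDist_exists hKne x
      exact (hx.2 y (hKA hy)).le.trans hxy
  have hSt : volume S ≠ ⊤ := ne_top_of_le_ne_top hRt (measure_mono fun x hx => hx.1)
  have hreal : volume.real S ≤ 2 * exp (-(ε : ℝ) ^ 2 / n) := by
    have h : ∀ r : ℝ, r < 1 / 2 → r * volume.real S ≤ exp (-(ε : ℝ) ^ 2 / n) := by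
      intro r hr
      rcases le_or_gt r 0 with h0 | h0
      · exact (mul_nonpos_of_nonpos_of_nonneg h0 measureReal_nonneg).trans (exp_pos _).le
      have h2 := hbd (ENNReal.ofReal r) (by
        have : (1 / 2 : ENNReal) = ENNReal.ofReal (1 / 2) := by
          rw [ENNReal.ofReal_div_of_pos (by norm_num)]; simp
        rw [this]
        exact (ENNReal.ofReal_lt_ofReal_iff (by norm_num)).mpr hr)
      have h3 := ENNReal.toReal_le_of_le_ofReal (exp_pos _).le h2
      rwa [ENNReal.toReal_mul, ENNReal.toReal_ofReal h0.le] at h3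
    have hlim : (1 / 2) * volume.real S ≤ exp (-(ε : ℝ) ^ 2 / n) := by
      by_contra! hc
      have hv : 0 < volume.real S := by
        have := exp_pos (-(ε : ℝ) ^ 2 / n)
        linarith
      obtain ⟨r, hr1, hr2⟩ := exists_between ((div_lt_iff₀ hv).mpr hc)
      have := h r hr2
      rw [div_lt_iff₀ hv] at hr1
      linarith
    linarith
  have hfin := norm_setIntegral_le_of_norm_le_const (μ := volume) (f := ρ) (s := S) (C := U)
    hSt.lt_top (fun x _ => by rw [Real.norm_of_nonneg (hρ0 x)]; exact hU x)
  calc _ ≤ _ := le_abs_self _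
    _ ≤ _ := hfin
    _ ≤ U * (2 * exp (-(ε : ℝ) ^ 2 / n)) := by gcongr
    _ = _ := by ring
end
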